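/- arXiv:2002.11087 — 3 statements merged into one kernel-verified Lean document; each statement's English description precedes it below -/
import Mathlib

section
/- Let q be a braiding matrix of Cartan type A_2 at a primitive third root of unity q (so q_11 = q_22 = q, q_12 q_21 = q^{-1}, ord q = 3). In the quotient B̂ = T(V)/⟨x_{1112}, x_{2221}, x_{2112}, x_{1221}⟩, for each i ≠ j ∈ {1,2} the relations [x_{ij}, x_{iij}]_c = 0, [x_{ij}, x_{jji}]_c = 0, and [x_{iij}, x_{jji}]_c = 0 hold. -/
noncomputable section

namespace Stmt13

variable {k : Type*} [Field k]

/-- The bicharacter on `ℤ²` extending a braiding matrix `Q`. -/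
def qb (Q : Fin 2 → Fin 2 → k) (α β : Fin 2 → ℤ) : k :=
  ∏ a, ∏ b, Q a b ^ (α a * β b)

/-- Degree of the generator `x_a`. -/
def ee (a : Fin 2) : Fin 2 → ℤ := Pi.single a 1

/-- Braided commutator of two homogeneous elements carried with their degrees:
`[u,v]_c = u v − q(α,β) v u`. -/
def brk (Q : Fin 2 → Fin 2 → k) (p r : FreeAlgebra k (Fin 2) × (Fin 2 → ℤ)) :
    FreeAlgebra k (Fin 2) × (Fin 2 → ℤ) :=
  (p.1 * r.1 - qb Q p.2 r.2 • (r.1 * p.1), p.2 + r.2)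

/-- The generator `x_a` together with its degree. -/
def gen (a : Fin 2) : FreeAlgebra k (Fin 2) × (Fin 2 → ℤ) :=
  (FreeAlgebra.ι k a, ee a)

end Stmt13

open Stmt13

namespace Stmt13

section Bicharacter

variable {k : Type*} [Field k] {Q : Fin 2 → Fin 2 → k}

theorem qb_add_left (hQ : ∀ a b, Q a b ≠ 0) (α β γ : Fin 2 → ℤ) :
    qb Q (α + β) γ = qb Q α γ * qb Q β γ := by
  simp only [qb, ← Finset.prod_mul_distrib, Pi.add_apply, add_mul, zpow_add₀ (hQ _ _)]

theorem qb_add_right (hQ : ∀ a b, Q a b ≠ 0) (α β γ : Fin 2 → ℤ) :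
    qb Q α (β + γ) = qb Q α β * qb Q α γ := by
  simp only [qb, ← Finset.prod_mul_distrib, Pi.add_apply, mul_add, zpow_add₀ (hQ _ _)]

theorem qb_ee (a b : Fin 2) : qb Q (ee a) (ee b) = Q a b := by
  fin_cases a <;> fin_cases b <;> simp [qb, ee, Fin.prod_univ_two]

end Bicharacter

section Commutator

variable {k A : Type*} [Field k] [Ring A] [Algebra k A]

/-- The commutator `u v - c v u` twisted by a scalar `c`. -/
def twistedComm (c : k) (u v : A) : A := u * v - c • (v * u)

theorem map_brk_fst {B : Type*} [Ring B] [Algebra k B] (Q : Fin 2 → Fin 2 → k)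
    (φ : FreeAlgebra k (Fin 2) →ₐ[k] B) (p r : FreeAlgebra k (Fin 2) × (Fin 2 → ℤ)) :
    φ (brk Q p r).1 = twistedComm (qb Q p.2 r.2) (φ p.1) (φ r.1) := by
  simp [brk, twistedComm]

variable {q a b : k} {X Y : A}

theorem twistedComm_xy_xxy_eq_zero (hq : q ^ 2 + q + 1 = 0) (hab : a * b = q ^ 2)
    (h₁ : twistedComm (q ^ 2 * a) X (twistedComm (q * a) X (twistedComm a X Y)) = 0)
    (h₃ : twistedComm (q * b ^ 2) Y (twistedComm (q * a) X (twistedComm a X Y)) = 0) :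
    twistedComm (q ^ 3 * a * b ^ 2) (twistedComm a X Y)
      (twistedComm (q * a) X (twistedComm a X Y)) = 0 := by
  have key : twistedComm (q ^ 3 * a * b ^ 2) (twistedComm a X Y)
      (twistedComm (q * a) X (twistedComm a X Y)) =
      (q * b ^ 2) • (twistedComm (q ^ 2 * a) X (twistedComm (q * a) X (twistedComm a X Y)) * Y)
      - a • (Y * twistedComm (q ^ 2 * a) X (twistedComm (q * a) X (twistedComm a X Y)))
      - (q ^ 2 * a ^ 2) •
        (twistedComm (q * b ^ 2) Y (twistedComm (q * a) X (twistedComm a X Y)) * X)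
      + X * twistedComm (q * b ^ 2) Y (twistedComm (q * a) X (twistedComm a X Y)) := by
    simp only [twistedComm, mul_sub, sub_mul, smul_sub, mul_smul_comm, smul_mul_assoc, mul_assoc]
    match_scalars <;> grind
  rw [key, h₁, h₃]
  simp

theorem twistedComm_xy_yyx_eq_zero (hq : q ^ 2 + q + 1 = 0) (hab : a * b = q ^ 2)
    (h₂ : twistedComm (q ^ 2 * b) Y (twistedComm (q * b) Y (twistedComm b Y X)) = 0)
    (h₃ : twistedComm (q * b ^ 2) Y (twistedComm (q * a) X (twistedComm a X Y)) = 0) :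
    twistedComm (q ^ 3 * a ^ 2 * b) (twistedComm a X Y)
      (twistedComm (q * b) Y (twistedComm b Y X)) = 0 := by
  have key : twistedComm (q ^ 3 * a ^ 2 * b) (twistedComm a X Y)
      (twistedComm (q * b) Y (twistedComm b Y X)) =
      X * twistedComm (q ^ 2 * b) Y (twistedComm (q * b) Y (twistedComm b Y X))
      - (q * a ^ 3) •
        (twistedComm (q ^ 2 * b) Y (twistedComm (q * b) Y (twistedComm b Y X)) * X)
      - (q ^ 2 * b) •
        (twistedComm (q * b ^ 2) Y (twistedComm (q * a) X (twistedComm a X Y)) * Y)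
      + a • (Y * twistedComm (q * b ^ 2) Y (twistedComm (q * a) X (twistedComm a X Y))) := by
    simp only [twistedComm, mul_sub, sub_mul, smul_sub, mul_smul_comm, smul_mul_assoc, mul_assoc]
    match_scalars <;> grind
  rw [key, h₂, h₃]
  simp

theorem twistedComm_xxy_yyx_eq_zero (hq : q ^ 2 + q + 1 = 0) (hab : a * b = q ^ 2)
    (h₁ : twistedComm (q ^ 2 * a) X (twistedComm (q * a) X (twistedComm a X Y)) = 0)
    (h₃ : twistedComm (q * b ^ 2) Y (twistedComm (q * a) X (twistedComm a X Y)) = 0) :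
    twistedComm (q ^ 4 * a ^ 4 * b) (twistedComm (q * a) X (twistedComm a X Y))
      (twistedComm (q * b) Y (twistedComm b Y X)) = 0 := by
  have key : twistedComm (q ^ 4 * a ^ 4 * b) (twistedComm (q * a) X (twistedComm a X Y))
      (twistedComm (q * b) Y (twistedComm b Y X)) =
      - b ^ 3 • (twistedComm (q ^ 2 * a) X (twistedComm (q * a) X (twistedComm a X Y)) * (Y * Y))
      - Y * twistedComm (q ^ 2 * a) X (twistedComm (q * a) X (twistedComm a X Y)) * Y
      - a ^ 3 • (Y * Y * twistedComm (q ^ 2 * a) X (twistedComm (q * a) X (twistedComm a X Y)))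
      - (q ^ 2 * a) •
        (twistedComm (q * b ^ 2) Y (twistedComm (q * a) X (twistedComm a X Y)) * (X * Y))
      - (q * a ^ 2) •
        (twistedComm (q * b ^ 2) Y (twistedComm (q * a) X (twistedComm a X Y)) * (Y * X))
      - (q ^ 2 * b) •
        (X * twistedComm (q * b ^ 2) Y (twistedComm (q * a) X (twistedComm a X Y)) * Y)
      - (q ^ 2 * a ^ 4) •
        (Y * twistedComm (q * b ^ 2) Y (twistedComm (q * a) X (twistedComm a X Y)) * X)
      - (q ^ 2 * a) •
        (X * Y * twistedComm (q * b ^ 2) Y (twistedComm (q * a) X (twistedComm a X Y)))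
      - (q * a ^ 2) •
        (Y * X * twistedComm (q * b ^ 2) Y (twistedComm (q * a) X (twistedComm a X Y))) := by
    simp only [twistedComm, mul_sub, sub_mul, smul_sub, mul_smul_comm, smul_mul_assoc, mul_assoc]
    match_scalars <;> grind
  rw [key, h₁, h₃]
  simp

end Commutator

end Stmt13

/-- Let `q` be of Cartan type `A_2` at a primitive third root of
unity `q` (`q_11 = q_22 = q`, `q_12 q_21 = q⁻¹`, `ord q = 3`).  In the quotient
`B̂ = T(V)/⟨x_1112, x_2221, x_2112, x_1221⟩`, for each `i ≠ j` the relations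
`[x_ij, x_iij]_c = 0`, `[x_ij, x_jji]_c = 0` and `[x_iij, x_jji]_c = 0` hold. -/
theorem stmt13 {k : Type*} [Field k] [CharZero k]
    (q q12 q21 : k) (hq3 : q ^ 3 = 1) (hq1 : q ≠ 1) (hq12 : q12 ≠ 0)
    (hq21 : q12 * q21 = q⁻¹)
    (Q : Fin 2 → Fin 2 → k) (hQ : Q = ![![q, q12], ![q21, q]])
    (rel : FreeAlgebra k (Fin 2) → FreeAlgebra k (Fin 2) → Prop)
    (hrel : rel = fun a b => b = 0 ∧
      (a = (brk Q (gen 0) (brk Q (gen 0) (brk Q (gen 0) (gen 1)))).1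
        ∨ a = (brk Q (gen 1) (brk Q (gen 1) (brk Q (gen 1) (gen 0)))).1
        ∨ a = (brk Q (gen 1) (brk Q (gen 0) (brk Q (gen 0) (gen 1)))).1
        ∨ a = (brk Q (gen 0) (brk Q (gen 1) (brk Q (gen 1) (gen 0)))).1)) :
    ∀ i j : Fin 2, i ≠ j →
      RingQuot.mkAlgHom k rel
          (brk Q (brk Q (gen i) (gen j)) (brk Q (gen i) (brk Q (gen i) (gen j)))).1 = 0
      ∧ RingQuot.mkAlgHom k rel
          (brk Q (brk Q (gen i) (gen j)) (brk Q (gen j) (brk Q (gen j) (gen i)))).1 = 0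
      ∧ RingQuot.mkAlgHom k rel
          (brk Q (brk Q (gen i) (brk Q (gen i) (gen j)))
            (brk Q (gen j) (brk Q (gen j) (gen i)))).1 = 0 := by
  have hq0 : q ≠ 0 := by
    rintro rfl
    simp at hq3
  have hq : q ^ 2 + q + 1 = 0 :=
    (mul_eq_zero.mp (by linear_combination hq3 : (q - 1) * (q ^ 2 + q + 1) = 0)).resolve_left
      (sub_ne_zero.mpr hq1)
  have hab : q12 * q21 = q ^ 2 := by
    rw [hq21]
    exact inv_eq_of_mul_eq_one_right (by linear_combination hq3)
  have h21 : q21 ≠ 0 := by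
    rintro rfl
    exact pow_ne_zero 2 hq0 (by simpa using hab.symm)
  have hQ0 : ∀ a b, Q a b ≠ 0 := by
    subst hQ
    intro a b
    fin_cases a <;> fin_cases b <;> simp [hq0, hq12, h21]
  have hdiag : ∀ i, Q i i = q := by
    subst hQ
    intro i
    fin_cases i <;> simp
  have hoff : ∀ i j, i ≠ j → Q i j * Q j i = q ^ 2 := by
    subst hQ
    intro i j hij
    fin_cases i <;> fin_cases j <;> simp_all [mul_comm]
  have hzero : ∀ u, rel u 0 → RingQuot.mkAlgHom k rel u = 0 := fun u hu => by
    simpa using RingQuot.mkAlgHom_rel k hu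
  have hserre : ∀ i j, i ≠ j → RingQuot.mkAlgHom k rel
      (brk Q (gen i) (brk Q (gen i) (brk Q (gen i) (gen j)))).1 = 0 := fun i j hij => by
    apply hzero
    rw [hrel]
    fin_cases i <;> fin_cases j <;> simp_all
  have hmixed : ∀ i j, i ≠ j → RingQuot.mkAlgHom k rel
      (brk Q (gen j) (brk Q (gen i) (brk Q (gen i) (gen j)))).1 = 0 := fun i j hij => by
    apply hzero
    rw [hrel]
    fin_cases i <;> fin_cases j <;> simp_all
  intro i j hij
  have h₁ := hserre i j hij
  have h₂ := hserre j i hij.symm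
  have h₃ := hmixed i j hij
  have hdeg : ∀ p r, (brk Q p r).2 = p.2 + r.2 := fun _ _ => rfl
  have hgen : ∀ a, (gen a : FreeAlgebra k (Fin 2) × (Fin 2 → ℤ)).2 = ee a := fun _ => rfl
  simp only [map_brk_fst, hdeg, hgen, qb_add_left hQ0, qb_add_right hQ0, qb_ee, hdiag]
    at h₁ h₂ h₃ ⊢
  refine ⟨?_, ?_, ?_⟩
  · convert twistedComm_xy_xxy_eq_zero (X := RingQuot.mkAlgHom k rel (gen i).1)
      (Y := RingQuot.mkAlgHom k rel (gen j).1) hq (hoff i j hij) ?_ ?_ using 2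
    · ring
    · convert h₁ using 2
      ring
    · convert h₃ using 2
      ring
  · convert twistedComm_xy_yyx_eq_zero (X := RingQuot.mkAlgHom k rel (gen i).1)
      (Y := RingQuot.mkAlgHom k rel (gen j).1) hq (hoff i j hij) ?_ ?_ using 2
    · ring
    · convert h₂ using 2
      ring
    · convert h₃ using 2
      ring
  · convert twistedComm_xxy_yyx_eq_zero (X := RingQuot.mkAlgHom k rel (gen i).1)
      (Y := RingQuot.mkAlgHom k rel (gen j).1) hq (hoff i j hij) ?_ ?_ using 2
    · ring
    · convert h₁ using 2
      ring
    · convert h₃ using 2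
      ring

end
end

section
/- In the tensor algebra T(V) of type A_2 with q of order 3 (q_11 = q_22 = q, q_12 q_21 = q^{-1}), the following comultiplication formula holds: Δ(x_{12}^3) = x_{12}^3 ⊗ 1 + 1 ⊗ x_{12}^3 + (q^{-1} − q^{-2}) x_{112} ⊗ x_{221} + (1 − q^{-1})^3 q_21^3 x_1^3 ⊗ x_2^3 + (1 − q)^2 q_21^3 x_{1112} ⊗ x_2^2 − (1 − q^{-1})^2 q^{-1} x_1^2 ⊗ x_{2221} + (q − 1) x_1 ⊗ [x_{12}, x_{221}]_c − (1 − q^{-1}) q_21 [x_{12}, x_{112}]_c ⊗ x_2. -/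
open scoped TensorProduct

noncomputable section

namespace Stmt15

variable {k : Type*} [Field k]

/-- The `ℤ²`-homogeneous component of degree `d` of the free algebra (tensor algebra):
the span of the words in the generators with letter-count vector `d`. -/
def piece (k : Type*) [Field k] (d : Fin 2 → ℤ) : Submodule k (FreeAlgebra k (Fin 2)) :=
  Submodule.span k {y | ∃ l : List (Fin 2),
    (∀ i, (l.count i : ℤ) = d i) ∧ y = (l.map (FreeAlgebra.ι k)).prod}

/-- The bicharacter on `ℤ²` extending a braiding matrix `Q`. -/
def qb (Q : Fin 2 → Fin 2 → k) (α β : Fin 2 → ℤ) : k :=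
  ∏ a, ∏ b, Q a b ^ (α a * β b)

/-- Degree of the generator `x_a`. -/
def ee (a : Fin 2) : Fin 2 → ℤ := Pi.single a 1

/-- Braided commutator of two homogeneous elements carried with their degrees. -/
def brk (Q : Fin 2 → Fin 2 → k) (p r : FreeAlgebra k (Fin 2) × (Fin 2 → ℤ)) :
    FreeAlgebra k (Fin 2) × (Fin 2 → ℤ) :=
  (p.1 * r.1 - qb Q p.2 r.2 • (r.1 * p.1), p.2 + r.2)

/-- The generator `x_a` together with its degree. -/
def gen (a : Fin 2) : FreeAlgebra k (Fin 2) × (Fin 2 → ℤ) :=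
  (FreeAlgebra.ι k a, ee a)

end Stmt15

namespace Stmt15

variable {k : Type*} [Field k]

lemma one_mem_piece : (1 : FreeAlgebra k (Fin 2)) ∈ piece k ![0, 0] :=
  Submodule.subset_span ⟨[], by simp [Fin.forall_fin_two], by simp⟩

lemma ι_zero_mem_piece : FreeAlgebra.ι k (0 : Fin 2) ∈ piece k ![1, 0] :=
  Submodule.subset_span ⟨[0], by simp [Fin.forall_fin_two], by simp⟩

lemma ι_one_mem_piece : FreeAlgebra.ι k (1 : Fin 2) ∈ piece k ![0, 1] :=
  Submodule.subset_span ⟨[1], by simp [Fin.forall_fin_two], by simp⟩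

lemma mul_mem_piece {d e : Fin 2 → ℤ} {x y : FreeAlgebra k (Fin 2)}
    (hx : x ∈ piece k d) (hy : y ∈ piece k e) : x * y ∈ piece k (d + e) := by
  have h : piece k d * piece k e ≤ piece k (d + e) := by
    rw [piece, piece, Submodule.span_mul_span]
    refine Submodule.span_mono ?_
    rintro _ ⟨_, ⟨l, hl, rfl⟩, _, ⟨l', hl', rfl⟩, rfl⟩
    exact ⟨l ++ l', fun i => by simp [hl, hl'], by simp⟩
  exact h (Submodule.mul_mem_mul hx hy)

lemma mul_mem_piece_vec {a b c d : ℤ} {x y : FreeAlgebra k (Fin 2)}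
    (hx : x ∈ piece k ![a, b]) (hy : y ∈ piece k ![c, d]) :
    x * y ∈ piece k ![a + c, b + d] := by
  simpa using mul_mem_piece hx hy

lemma qb_vec (q q12 q21 : k) (a b c d : ℤ) :
    qb ![![q, q12], ![q21, q]] ![a, b] ![c, d]
      = q ^ (a * c) * q12 ^ (a * d) * (q21 ^ (b * c) * q ^ (b * d)) := by
  simp [qb, Fin.prod_univ_two]

lemma brk_vec (Q : Fin 2 → Fin 2 → k) (x y : FreeAlgebra k (Fin 2)) (a b c d : ℤ) :
    brk Q (x, ![a, b]) (y, ![c, d])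
      = (x * y - qb Q ![a, b] ![c, d] • (y * x), ![a + c, b + d]) := by
  simp [brk]

lemma gen_zero : gen (k := k) 0 = (FreeAlgebra.ι k 0, ![1, 0]) := by
  simp only [gen, ee]; congr 1; ext i; fin_cases i <;> simp

lemma gen_one : gen (k := k) 1 = (FreeAlgebra.ι k 1, ![0, 1]) := by
  simp only [gen, ee]; congr 1; ext i; fin_cases i <;> simp

end Stmt15

open Stmt15

set_option maxHeartbeats 4000000 in
/-- In the braided tensor algebra `T(V)` of type `A_2` with `q` of
order 3 (`q_11 = q_22 = q`, `q_12 q_21 = q⁻¹`), with braided comultiplication `Δ`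
(the algebra map for the braiding-twisted product on `T(V) ⊗ T(V)` determined by the
bicharacter, with the generators primitive), it holds:
`Δ(x_12³) = x_12³ ⊗ 1 + 1 ⊗ x_12³ + (q⁻¹ − q⁻²) x_112 ⊗ x_221
  + (1−q⁻¹)³ q_21³ x_1³ ⊗ x_2³ + (1−q)² q_21³ x_1112 ⊗ x_2²
  − (1−q⁻¹)² q⁻¹ x_1² ⊗ x_2221 + (q−1) x_1 ⊗ [x_12,x_221]_c
  − (1−q⁻¹) q_21 [x_12,x_112]_c ⊗ x_2`. -/
theorem stmt15 {k : Type*} [Field k] [CharZero k]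
    (q q12 q21 : k) (hq3 : q ^ 3 = 1) (hq1 : q ≠ 1) (hq12 : q12 ≠ 0)
    (hq21 : q12 * q21 = q⁻¹)
    (Q : Fin 2 → Fin 2 → k) (hQ : Q = ![![q, q12], ![q21, q]])
    (m2 : (FreeAlgebra k (Fin 2) ⊗[k] FreeAlgebra k (Fin 2))
      →ₗ[k] (FreeAlgebra k (Fin 2) ⊗[k] FreeAlgebra k (Fin 2))
      →ₗ[k] (FreeAlgebra k (Fin 2) ⊗[k] FreeAlgebra k (Fin 2)))
    (hm2 : ∀ (a b c d : FreeAlgebra k (Fin 2)) (β' γ' : Fin 2 → ℤ),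
      b ∈ piece k β' → c ∈ piece k γ' →
      m2 (a ⊗ₜ b) (c ⊗ₜ d) = qb Q β' γ' • ((a * c) ⊗ₜ[k] (b * d)))
    (Δ : FreeAlgebra k (Fin 2) →ₗ[k] FreeAlgebra k (Fin 2) ⊗[k] FreeAlgebra k (Fin 2))
    (hΔmul : ∀ x y, Δ (x * y) = m2 (Δ x) (Δ y))
    (hΔone : Δ 1 = 1 ⊗ₜ 1)
    (hΔgen : ∀ a : Fin 2, Δ (FreeAlgebra.ι k a)
      = FreeAlgebra.ι k a ⊗ₜ 1 + 1 ⊗ₜ FreeAlgebra.ι k a) :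
    Δ ((brk Q (gen 0) (gen 1)).1 ^ 3)
      = ((brk Q (gen 0) (gen 1)).1 ^ 3) ⊗ₜ 1
        + 1 ⊗ₜ ((brk Q (gen 0) (gen 1)).1 ^ 3)
        + (q⁻¹ - q⁻¹ ^ 2) •
            ((brk Q (gen 0) (brk Q (gen 0) (gen 1))).1
              ⊗ₜ (brk Q (gen 1) (brk Q (gen 1) (gen 0))).1)
        + ((1 - q⁻¹) ^ 3 * q21 ^ 3) •
            ((FreeAlgebra.ι k 0 ^ 3) ⊗ₜ (FreeAlgebra.ι k 1 ^ 3))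
        + ((1 - q) ^ 2 * q21 ^ 3) •
            ((brk Q (gen 0) (brk Q (gen 0) (brk Q (gen 0) (gen 1)))).1
              ⊗ₜ (FreeAlgebra.ι k 1 ^ 2))
        - ((1 - q⁻¹) ^ 2 * q⁻¹) •
            ((FreeAlgebra.ι k 0 ^ 2)
              ⊗ₜ (brk Q (gen 1) (brk Q (gen 1) (brk Q (gen 1) (gen 0)))).1)
        + (q - 1) •
            (FreeAlgebra.ι k 0
              ⊗ₜ (brk Q (brk Q (gen 0) (gen 1)) (brk Q (gen 1) (brk Q (gen 1) (gen 0)))).1)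
        - ((1 - q⁻¹) * q21) •
            ((brk Q (brk Q (gen 0) (gen 1)) (brk Q (gen 0) (brk Q (gen 0) (gen 1)))).1
              ⊗ₜ FreeAlgebra.ι k 1) := by
  subst hQ
  have hq0 : q ≠ 0 := by rintro rfl; simp at hq3
  have hqq : q ^ 2 = -q - 1 := by
    have h : (q - 1) * (q ^ 2 + q + 1) = 0 := by linear_combination hq3
    linear_combination (mul_eq_zero.mp h).resolve_left (sub_ne_zero.mpr hq1)
  have hqi : q⁻¹ = -q - 1 := by
    rw [inv_eq_iff_eq_inv, ← hqq, eq_comm, inv_eq_of_mul_eq_one_left]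
    linear_combination hq3
  have h0 : q21 ≠ 0 := by
    rintro rfl
    exact inv_ne_zero hq0 (by simpa using hq21.symm)
  obtain ⟨t, ht⟩ : ∃ t, q21 * t = 1 := ⟨q21⁻¹, mul_inv_cancel₀ h0⟩
  obtain rfl : q12 = (-q - 1) * t := by
    rw [hqi] at hq21
    linear_combination (-q12) * ht + t * hq21
  rw [hqi]
  have hm : ∀ (a b c d : FreeAlgebra k (Fin 2)) {m n m' n' : ℤ},
      b ∈ piece k ![m, n] → c ∈ piece k ![m', n'] →
      m2 (a ⊗ₜ b) (c ⊗ₜ d) =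
        (q ^ (m * m') * ((-q - 1) * t) ^ (m * n') * (q21 ^ (n * m') * q ^ (n * n'))) •
          ((a * c) ⊗ₜ[k] (b * d)) := fun a b c d m n m' n' hb hc => by
    rw [hm2 a b c d _ _ hb hc, qb_vec]
  simp only [gen_zero, gen_one, brk_vec, qb_vec]
  norm_num only [zpow_zero, zpow_one, zpow_ofNat, pow_zero, pow_one, mul_one, one_mul]
  have hx := ι_zero_mem_piece (k := k)
  have hy := ι_one_mem_piece (k := k)
  have hΔx := hΔgen 0
  have hΔy := hΔgen 1
  generalize FreeAlgebra.ι k (0 : Fin 2) = x at *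
  generalize FreeAlgebra.ι k (1 : Fin 2) = y at *
  obtain ⟨p, hpdef⟩ : ∃ p, p = x * y - ((-q - 1) * t) • (y * x) := ⟨_, rfl⟩
  have hp : p ∈ piece k ![1, 1] := by
    rw [hpdef]
    exact Submodule.sub_mem _ (by simpa using mul_mem_piece_vec hx hy)
      (Submodule.smul_mem _ _ (by simpa using mul_mem_piece_vec hy hx))
  have hpp := mul_mem_piece_vec hp hp
  have hpx := mul_mem_piece_vec hp hx
  have hxp := mul_mem_piece_vec hx hp
  have hxx := mul_mem_piece_vec hx hx
  have hΔp : Δ p = p ⊗ₜ 1 + (q + 2) • (x ⊗ₜ y) + 1 ⊗ₜ p := by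
    rw [hpdef]
    simp only [map_sub, map_smul, hΔmul, hΔx, hΔy, map_add, LinearMap.add_apply,
      fun a d => hm a _ _ d one_mem_piece one_mem_piece,
      fun a d => hm a _ _ d one_mem_piece hx, fun a d => hm a _ _ d one_mem_piece hy,
      fun a d => hm a _ _ d hx one_mem_piece, fun a d => hm a _ _ d hy one_mem_piece,
      fun a d => hm a _ _ d hx hy, fun a d => hm a _ _ d hy hx]
    norm_num only [zpow_zero, zpow_one, mul_one, one_mul, TensorProduct.sub_tmul,
      TensorProduct.tmul_sub, ← TensorProduct.smul_tmul', TensorProduct.tmul_smul]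
    match_scalars <;> clear * - hqq ht <;> grind
  have hΔp3 : Δ (p ^ 3) = m2 (Δ p) (m2 (Δ p) (Δ p)) := by
    rw [pow_succ', hΔmul, pow_two, hΔmul]
  rw [← hpdef, hΔp3, hΔp]
  simp only [map_smul, map_add, LinearMap.add_apply, LinearMap.smul_apply, mul_one, one_mul,
      fun a d => hm a _ _ d one_mem_piece one_mem_piece, fun a d => hm a _ _ d one_mem_piece hx, fun a d => hm a _ _ d one_mem_piece hp, fun a d => hm a _ _ d one_mem_piece hpp,
      fun a d => hm a _ _ d one_mem_piece hpx, fun a d => hm a _ _ d one_mem_piece hxp, fun a d => hm a _ _ d one_mem_piece hxx,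
      fun a d => hm a _ _ d hy one_mem_piece, fun a d => hm a _ _ d hy hx, fun a d => hm a _ _ d hy hp, fun a d => hm a _ _ d hy hpp,
      fun a d => hm a _ _ d hy hpx, fun a d => hm a _ _ d hy hxp, fun a d => hm a _ _ d hy hxx,
      fun a d => hm a _ _ d hp one_mem_piece, fun a d => hm a _ _ d hp hx, fun a d => hm a _ _ d hp hp, fun a d => hm a _ _ d hp hpp,
      fun a d => hm a _ _ d hp hpx, fun a d => hm a _ _ d hp hxp, fun a d => hm a _ _ d hp hxx]
  clear * - hqq ht hpdef
  norm_num only [zpow_zero, zpow_one, zpow_ofNat, pow_zero, pow_one, mul_one, one_mul]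
  simp only [hpdef, pow_succ _ 2, pow_two (_ : FreeAlgebra k (Fin 2)), sub_mul, mul_sub,
    smul_mul_assoc, mul_smul_comm, TensorProduct.sub_tmul, TensorProduct.tmul_sub,
    ← TensorProduct.smul_tmul', TensorProduct.tmul_smul, mul_assoc]
  match_scalars <;> grind

end
end

section
/- Let a = (a_ij) be a symmetrizable indecomposable generalized Cartan matrix with symmetrizer d, g = g(a) the associated Kac–Moody algebra, q ∈ k^× and q = (q_ij) any braiding matrix with q_ii = q^{d_i} and q_ij q_ji = q^{d_i a_ij}. Let B̆_q = T(V)/⟨(ad_c x_i)^{1−a_ij} x_j : i ≠ j⟩. Then GK-dim B̆_q ≥ dim g^+, where g^+ is the positive part of the triangular decomposition. -/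
noncomputable section

open scoped ENNReal

namespace Stmt16

/-- The Gelfand–Kirillov dimension of a `k`-algebra `A`. -/
def GKdim (k A : Type*) [Field k] [Ring A] [Algebra k A] : ℝ≥0∞ :=
  ⨆ S : Finset A,
    Filter.limsup
      (fun n : ℕ => ENNReal.ofReal (Real.logb n
        (Module.finrank k ((Submodule.span k (insert (1 : A) (S : Set A))) ^ n : Submodule k A))))
      Filter.atTop

variable {k : Type*} [Field k] {n : ℕ}

/-- The bicharacter on `ℤ^n` extending a braiding matrix `Q`. -/
def qb (Q : Fin n → Fin n → kˣ) (α β : Fin n → ℤ) : kˣ :=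
  ∏ a, ∏ b, Q a b ^ (α a * β b)

/-- Degree of the generator `x_a`. -/
def ee (a : Fin n) : Fin n → ℤ := Pi.single a 1

/-- Braided commutator of homogeneous elements carried with their degrees. -/
def brk (Q : Fin n → Fin n → kˣ) (p r : FreeAlgebra k (Fin n) × (Fin n → ℤ)) :
    FreeAlgebra k (Fin n) × (Fin n → ℤ) :=
  (p.1 * r.1 - (qb Q p.2 r.2 : k) • (r.1 * p.1), p.2 + r.2)

/-- The generator `x_a` together with its degree. -/
def gen (Q : Fin n → Fin n → kˣ) (a : Fin n) : FreeAlgebra k (Fin n) × (Fin n → ℤ) :=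
  (FreeAlgebra.ι k a, ee a)

/-- The iterated braided adjoint `(ad_c x_i)^m` applied to a homogeneous element. -/
def adIter (Q : Fin n → Fin n → kˣ) (i : Fin n) :
    ℕ → FreeAlgebra k (Fin n) × (Fin n → ℤ) → FreeAlgebra k (Fin n) × (Fin n → ℤ)
  | 0, p => p
  | m + 1, p => brk Q (gen Q i) (adIter Q i m p)

end Stmt16

open Stmt16

namespace Stmt16

/-- Injectivity of the `m`-th power of `f` on the weight space of weight `m ≥ 0`, for operators
satisfying `sl₂`-type relations with `e` locally nilpotent. -/
theorem eq_zero_of_pow_eq_zero {R M : Type*} [CommRing R] [AddCommGroup M] [Module R M]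
    (tf : ∀ (a : R) (x : M), a ≠ 0 → a • x = 0 → x = 0)
    (e f : Module.End R M) (P : ℤ → Submodule R M) (w : ℤ → ℤ) (hw : ∀ t, w (t + 1) = w t + 2)
    (he : ∀ t, ∀ x ∈ P t, e x ∈ P (t + 1))
    (hrel : ∀ t, ∀ x ∈ P t, ∀ s : ℕ, ∃ a b : R, a ≠ 0 ∧ ((s : ℤ) + 1 ≤ w t → b ≠ 0) ∧
      e ((f ^ (s + 1)) x) = a • (f ^ (s + 1)) (e x) + b • (f ^ s) x)
    (N : ℕ) : ∀ (m : ℕ) (t : ℤ) (x : M), x ∈ P t → w t = m → (e ^ N) x = 0 → (f ^ m) x = 0 →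
      x = 0 := by
  induction N with
  | zero => intro m t x _ _ h _; simpa using h
  | succ N ih =>
    intro m t x hx hm hN hf
    have hex : e x = 0 := by
      apply ih (m + 2) (t + 1) (e x) (he t x hx) (by rw [hw, hm]; push_cast; ring)
      · rw [pow_succ] at hN; exact hN
      · obtain ⟨a, b, ha, -, h⟩ := hrel t x hx (m + 1)
        have h1 : (f ^ (m + 1)) x = 0 := by rw [pow_succ']; simp [hf]
        have h2 : (f ^ (m + 1 + 1)) x = 0 := by rw [pow_succ']; simp [h1]
        rw [h1, h2, map_zero, smul_zero, add_zero] at h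
        exact tf a _ ha h.symm
    have key : ∀ j : ℕ, j ≤ m → (f ^ j) x = 0 → x = 0 := by
      intro j
      induction j with
      | zero => intro _ h; simpa using h
      | succ j ihj =>
        intro hj h
        apply ihj (by omega)
        obtain ⟨a, b, -, hb, h'⟩ := hrel t x hx j
        rw [h, hex, map_zero, map_zero, smul_zero, zero_add] at h'
        exact tf b _ (hb (by rw [hm]; exact_mod_cast hj)) h'.symm
    exact key m le_rfl hf

/-- The square-zero extension of a Lie algebra by a Lie module. -/
@[ext] structure SqZero (L M : Type*) where
  fst : L
  snd : M

namespace SqZero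

section Basic

variable {k L M : Type*} [CommRing k] [AddCommGroup L] [Module k L] [AddCommGroup M] [Module k M]

/-- The underlying pair. -/
def equivProd (L M : Type*) : SqZero L M ≃ L × M :=
  ⟨fun x => (x.fst, x.snd), fun x => ⟨x.1, x.2⟩, fun _ => rfl, fun _ => rfl⟩

instance : AddCommGroup (SqZero L M) := (equivProd L M).addCommGroup
instance : Module k (SqZero L M) := (equivProd L M).module k

@[simp] theorem fst_add (x y : SqZero L M) : (x + y).fst = x.fst + y.fst := rfl
@[simp] theorem snd_add (x y : SqZero L M) : (x + y).snd = x.snd + y.snd := rfl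
@[simp] theorem fst_zero : (0 : SqZero L M).fst = 0 := rfl
@[simp] theorem snd_zero : (0 : SqZero L M).snd = 0 := rfl
@[simp] theorem fst_smul (c : k) (x : SqZero L M) : (c • x).fst = c • x.fst := rfl
@[simp] theorem snd_smul (c : k) (x : SqZero L M) : (c • x).snd = c • x.snd := rfl

end Basic

variable {k L M : Type*} [CommRing k] [LieRing L] [LieAlgebra k L] [AddCommGroup M] [Module k M]
  [LieRingModule L M] [LieModule k L M]

instance : Bracket (SqZero L M) (SqZero L M) :=
  ⟨fun x y => ⟨⁅x.fst, y.fst⁆, ⁅x.fst, y.snd⁆ - ⁅y.fst, x.snd⁆⟩⟩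

@[simp] theorem fst_lie (x y : SqZero L M) : ⁅x, y⁆.fst = ⁅x.fst, y.fst⁆ := rfl
@[simp] theorem snd_lie (x y : SqZero L M) :
    ⁅x, y⁆.snd = ⁅x.fst, y.snd⁆ - ⁅y.fst, x.snd⁆ := rfl

instance : LieRing (SqZero L M) where
  add_lie x y z := by ext <;> simp; abel
  lie_add x y z := by ext <;> simp; abel
  lie_self x := by ext <;> simp
  leibniz_lie x y z := by ext <;> simp; abel

instance : LieAlgebra k (SqZero L M) where
  lie_smul c x y := by ext <;> simp [smul_sub]

end SqZero

section Serre

universe u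

variable {k L : Type u} [Field k] [LieRing L] [LieAlgebra k L] {n : ℕ}

/-- `L` is presented by the generators `e i` and the Serre relations of `A`. -/
structure IsSerre (A : Matrix (Fin n) (Fin n) ℤ) (e : Fin n → L) : Prop where
  rel : ∀ i j, i ≠ j → (LieAlgebra.ad k L (e i) ^ (1 - A i j).toNat) (e j) = 0
  span : LieSubalgebra.lieSpan k L (Set.range e) = ⊤
  lift : ∀ (M : Type u) [LieRing M] [LieAlgebra k M] (f : Fin n → M),
    (∀ i j, i ≠ j → (LieAlgebra.ad k M (f i) ^ (1 - A i j).toNat) (f j) = 0) →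
    ∃ φ : L →ₗ⁅k⁆ M, ∀ i, φ (e i) = f i

theorem isSerre_quotient (A : Matrix (Fin n) (Fin n) ℤ)
    (I : LieIdeal k (FreeLieAlgebra k (Fin n)))
    (hI : I = LieSubmodule.lieSpan k (FreeLieAlgebra k (Fin n))
      {x | ∃ i j, i ≠ j ∧
        x = ((LieAlgebra.ad k (FreeLieAlgebra k (Fin n)) (FreeLieAlgebra.of k i))
              ^ (1 - A i j).toNat) (FreeLieAlgebra.of k j)}) :
    IsSerre (k := k) (L := FreeLieAlgebra k (Fin n) ⧸ I) A
      (fun i => LieSubmodule.Quotient.mk (FreeLieAlgebra.of k i)) := by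
  have hpow : ∀ (N M : Type u) [LieRing N] [LieAlgebra k N] [LieRing M] [LieAlgebra k M]
      (φ : N →ₗ⁅k⁆ M) (x y : N) (m : ℕ),
      φ ((LieAlgebra.ad k N x ^ m) y) = (LieAlgebra.ad k M (φ x) ^ m) (φ y) := by
    intro N M _ _ _ _ φ x y m
    induction m with
    | zero => simp
    | succ m ih => simp [pow_succ', ih]
  have hpi : ∀ x : FreeLieAlgebra k (Fin n), ∀ y m,
      (LieAlgebra.ad k (FreeLieAlgebra k (Fin n) ⧸ I) (LieSubmodule.Quotient.mk x) ^ m)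
        (LieSubmodule.Quotient.mk y) =
      LieSubmodule.Quotient.mk ((LieAlgebra.ad k _ x ^ m) y) := by
    intro x y m
    induction m with
    | zero => simp
    | succ m ih => simp [pow_succ', ih]
  refine ⟨?_, ?_, ?_⟩
  · intro i j hij
    rw [hpi]
    refine (LieSubmodule.Quotient.mk_eq_zero (N := I)).2 ?_
    rw [hI]
    exact LieSubmodule.subset_lieSpan ⟨i, j, hij, rfl⟩
  · set S := LieSubalgebra.lieSpan k (FreeLieAlgebra k (Fin n) ⧸ I)
      (Set.range fun i => (LieSubmodule.Quotient.mk (FreeLieAlgebra.of k i) :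
        FreeLieAlgebra k (Fin n) ⧸ I)) with hS
    let φ : FreeLieAlgebra k (Fin n) →ₗ⁅k⁆ S := FreeLieAlgebra.lift k
      (fun i => ⟨LieSubmodule.Quotient.mk (FreeLieAlgebra.of k i),
        LieSubalgebra.subset_lieSpan ⟨i, rfl⟩⟩)
    let π : FreeLieAlgebra k (Fin n) →ₗ⁅k⁆ (FreeLieAlgebra k (Fin n) ⧸ I) :=
      { (LieSubmodule.Quotient.mk' I : FreeLieAlgebra k (Fin n) →ₗ[k] _) with
        map_lie' := fun {x y} => rfl }
    have h : S.incl.comp φ = π := by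
      apply FreeLieAlgebra.hom_ext
      intro i
      simp [φ, FreeLieAlgebra.lift_of_apply]
      rfl
    rw [eq_top_iff]
    intro x _
    obtain ⟨y, rfl⟩ := LieSubmodule.Quotient.surjective_mk' I x
    have := LieHom.congr_fun h y
    have h2 : π y = LieSubmodule.Quotient.mk' I y := rfl
    rw [← h2, ← this]
    exact (φ y).2
  · intro M _ _ f hf
    let φ := FreeLieAlgebra.lift k f
    have hle : I ≤ φ.ker := by
      rw [hI, LieSubmodule.lieSpan_le]
      rintro x ⟨i, j, hij, rfl⟩
      rw [SetLike.mem_coe, LieHom.mem_ker, hpow]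
      simpa [φ, FreeLieAlgebra.lift_of_apply] using hf i j hij
    refine ⟨{ (I.toSubmodule.liftQ (φ : FreeLieAlgebra k (Fin n) →ₗ[k] M)
        (fun x hx => hle hx)) with map_lie' := ?_ }, ?_⟩
    · intro x y
      obtain ⟨x, rfl⟩ := LieSubmodule.Quotient.surjective_mk' I x
      obtain ⟨y, rfl⟩ := LieSubmodule.Quotient.surjective_mk' I y
      exact φ.map_lie x y
    · intro i
      exact FreeLieAlgebra.lift_of_apply f i

variable {A : Matrix (Fin n) (Fin n) ℤ} {e : Fin n → L}

theorem IsSerre.exists_derivation (h : IsSerre (k := k) A e) {M : Type u} [AddCommGroup M]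
    [Module k M] [LieRingModule L M] [LieModule k L M] (f : Fin n → M)
    (hf : ∀ i j, i ≠ j → ∃ y : ℕ → M, y 0 = f j ∧
      (∀ m, y (m + 1) = ⁅e i, y m⁆ - ⁅(LieAlgebra.ad k L (e i) ^ m) (e j), f i⁆) ∧
      y (1 - A i j).toNat = 0) :
    ∃ D : LieDerivation k L M, ∀ i, D (e i) = f i := by
  obtain ⟨φ, hφ⟩ := h.lift (SqZero L M) (fun i => (⟨e i, f i⟩ : SqZero L M)) (by
    intro i j hij
    obtain ⟨y, h0, hs, hN⟩ := hf i j hij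
    have key : ∀ m, (LieAlgebra.ad k (SqZero L M) (⟨e i, f i⟩ : SqZero L M) ^ m)
        (⟨e j, f j⟩ : SqZero L M) =
        (⟨(LieAlgebra.ad k L (e i) ^ m) (e j), y m⟩ : SqZero L M) := by
      intro m
      induction m with
      | zero => rw [h0]; simp
      | succ m ih =>
        rw [pow_succ', Module.End.mul_apply, ih, LieAlgebra.ad_apply, pow_succ']
        ext <;> simp [hs]
    rw [key, h.rel i j hij, hN]
    rfl)
  have hfst : ∀ x, (φ x).fst = x := by
    have : (LieSubalgebra.lieSpan k L (Set.range e)) ≤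
        { carrier := {x | (φ x).fst = x}
          add_mem' := fun {a b} ha hb => by simp_all
          zero_mem' := by simp
          smul_mem' := fun c x hx => by simp_all
          lie_mem' := fun {a b} ha hb => by
            simp only [Set.mem_ofPred_eq] at *
            simp [ha, hb] } := by
      rw [LieSubalgebra.lieSpan_le]
      rintro _ ⟨i, rfl⟩
      change (φ (e i)).fst = e i
      rw [hφ]
    intro x
    exact this (by rw [h.span]; trivial)
  refine ⟨⟨(⟨⟨fun x => (φ x).snd, by simp⟩, by simp⟩ : L →ₗ[k] M), ?_⟩, fun i => by
    change (φ (e i)).snd = f i; rw [hφ]⟩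
  intro a b
  change (φ ⁅a, b⁆).snd = ⁅a, (φ b).snd⁆ - ⁅b, (φ a).snd⁆
  rw [LieHom.map_lie, SqZero.snd_lie, hfst, hfst]

end Serre

/-- The extension of the adjoint module by the trivial module given by a derivation `H`. -/
@[ext] structure DerExt {k L : Type*} [CommRing k] [LieRing L] [LieAlgebra k L]
    (H : LieDerivation k L L) where
  fst : L
  snd : k

namespace DerExt

variable {k L : Type*} [CommRing k] [LieRing L] [LieAlgebra k L] {H : LieDerivation k L L}

/-- The underlying pair. -/
def equivProd (H : LieDerivation k L L) : DerExt H ≃ L × k :=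
  ⟨fun x => (x.fst, x.snd), fun x => ⟨x.1, x.2⟩, fun _ => rfl, fun _ => rfl⟩

instance : AddCommGroup (DerExt H) := (equivProd H).addCommGroup
instance : Module k (DerExt H) := (equivProd H).module k

@[simp] theorem fst_add (x y : DerExt H) : (x + y).fst = x.fst + y.fst := rfl
@[simp] theorem snd_add (x y : DerExt H) : (x + y).snd = x.snd + y.snd := rfl
@[simp] theorem fst_sub (x y : DerExt H) : (x - y).fst = x.fst - y.fst := rfl
@[simp] theorem snd_sub (x y : DerExt H) : (x - y).snd = x.snd - y.snd := rfl
@[simp] theorem fst_neg (x : DerExt H) : (-x).fst = -x.fst := rfl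
@[simp] theorem snd_neg (x : DerExt H) : (-x).snd = -x.snd := rfl
@[simp] theorem fst_zero : (0 : DerExt H).fst = 0 := rfl
@[simp] theorem snd_zero : (0 : DerExt H).snd = 0 := rfl
@[simp] theorem fst_smul (c : k) (x : DerExt H) : (c • x).fst = c • x.fst := rfl
@[simp] theorem snd_smul (c : k) (x : DerExt H) : (c • x).snd = c • x.snd := rfl

instance : Bracket L (DerExt H) := ⟨fun x y => ⟨⁅x, y.fst⁆ - y.snd • H x, 0⟩⟩

@[simp] theorem fst_lie (x : L) (y : DerExt H) : ⁅x, y⁆.fst = ⁅x, y.fst⁆ - y.snd • H x := rfl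
@[simp] theorem snd_lie (x : L) (y : DerExt H) : ⁅x, y⁆.snd = 0 := rfl

instance : LieRingModule L (DerExt H) where
  add_lie x y m := by ext <;> simp; abel
  lie_add x y m := by ext <;> simp [add_smul]; abel
  leibniz_lie x y m := by ext <;> simp [smul_sub]; abel

instance : LieModule k L (DerExt H) where
  smul_lie c x m := by ext <;> simp [smul_sub, smul_comm c]
  lie_smul c x m := by ext <;> simp [smul_sub, mul_smul]

end DerExt

section Weights

universe u

variable {k L : Type u} [Field k] [LieRing L] [LieAlgebra k L] {n : ℕ}

/-- Iterated brackets of the generators, with their weights. -/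
inductive IsMono (e : Fin n → L) : L → (Fin n → ℤ) → Prop
  | gen (i : Fin n) : IsMono e (e i) (ee i)
  | lie {x y : L} {β γ : Fin n → ℤ} : IsMono e x β → IsMono e y γ → IsMono e ⁅x, y⁆ (β + γ)

/-- The weight spaces of a Lie algebra with chosen generators. -/
def wtSpace (k : Type u) [Field k] [LieAlgebra k L] (e : Fin n → L) (β : Fin n → ℤ) :
    Submodule k L :=
  Submodule.span k {x | IsMono e x β}

/-- The value of the `i`-th simple coroot on `β`. -/
def coroot (A : Matrix (Fin n) (Fin n) ℤ) (i : Fin n) (β : Fin n → ℤ) : ℤ := ∑ l, A i l * β l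

/-- The `i`-th simple reflection. -/
def refl (A : Matrix (Fin n) (Fin n) ℤ) (i : Fin n) (β : Fin n → ℤ) : Fin n → ℤ :=
  β - coroot A i β • ee i

theorem ee_apply (i j : Fin n) : ee i j = if j = i then 1 else 0 := by
  simp [ee, Pi.single_apply]

theorem coroot_add (A : Matrix (Fin n) (Fin n) ℤ) (i : Fin n) (β γ : Fin n → ℤ) :
    coroot A i (β + γ) = coroot A i β + coroot A i γ := by
  simp [coroot, mul_add, Finset.sum_add_distrib]

theorem coroot_smul (A : Matrix (Fin n) (Fin n) ℤ) (i : Fin n) (c : ℤ) (β : Fin n → ℤ) :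
    coroot A i (c • β) = c * coroot A i β := by
  simp [coroot, Finset.mul_sum, mul_left_comm]

theorem coroot_ee (A : Matrix (Fin n) (Fin n) ℤ) (i j : Fin n) : coroot A i (ee j) = A i j := by
  simp [coroot, ee_apply]

variable {A : Matrix (Fin n) (Fin n) ℤ} {e : Fin n → L}

theorem IsMono.nonneg {x : L} {β : Fin n → ℤ} (h : IsMono e x β) : ∀ l, 0 ≤ β l := by
  induction h with
  | gen i => intro l; rw [ee_apply]; split_ifs <;> simp
  | lie _ _ h₁ h₂ => intro l; exact add_nonneg (h₁ l) (h₂ l)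

theorem IsMono.ne_zero {x : L} {β : Fin n → ℤ} (h : IsMono e x β) : β ≠ 0 := by
  have : 0 < ∑ l, β l := by
    induction h with
    | gen i => simp [ee_apply]
    | lie _ _ h₁ h₂ => simp only [Pi.add_apply, Finset.sum_add_distrib]; omega
  rintro rfl
  simp at this

theorem IsMono.eq_of_support {x : L} {β : Fin n → ℤ} (h : IsMono e x β) (i : Fin n)
    (hβ : ∀ l, l ≠ i → β l = 0) : x = 0 ∨ (x = e i ∧ β = ee i) := by
  induction h with
  | gen j =>
    by_cases hj : j = i
    · subst hj; exact Or.inr ⟨rfl, rfl⟩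
    · have := hβ j hj; simp [ee_apply] at this
  | lie hx hy h₁ h₂ =>
    have e₁ := h₁ (fun l hl => by
      have h := hβ l hl; have := hx.nonneg l; have := hy.nonneg l; simp at h; omega)
    have e₂ := h₂ (fun l hl => by
      have h := hβ l hl; have := hx.nonneg l; have := hy.nonneg l; simp at h; omega)
    left
    rcases e₁ with rfl | ⟨rfl, -⟩ <;> rcases e₂ with rfl | ⟨rfl, -⟩ <;> simp

theorem wtSpace_eq_bot_of_neg {β : Fin n → ℤ} {l : Fin n} (h : β l < 0) : wtSpace k e β = ⊥ := by
  refine Submodule.span_eq_bot.2 fun x hx => ?_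
  have := IsMono.nonneg hx l
  omega

theorem wtSpace_ne_bot {β : Fin n → ℤ} (h : wtSpace k e β ≠ ⊥) :
    ∃ x, x ≠ 0 ∧ IsMono e x β := by
  by_contra! hc
  exact h (Submodule.span_eq_bot.2 fun x hx => by_contra fun h0 => hc x h0 hx)

theorem iSup_wtSpace (h : LieSubalgebra.lieSpan k L (Set.range e) = ⊤) :
    ⨆ β, wtSpace k e β = ⊤ := by
  have hm : ∀ x, ∀ y, x ∈ Submodule.span k {x | ∃ β, IsMono e x β} →
      y ∈ Submodule.span k {x | ∃ β, IsMono e x β} →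
      ⁅x, y⁆ ∈ Submodule.span k {x | ∃ β, IsMono e x β} := by
    intro x y hx hy
    induction hx using Submodule.span_induction with
    | mem x hx =>
      obtain ⟨β, hx⟩ := hx
      induction hy using Submodule.span_induction with
      | mem y hy =>
        obtain ⟨γ, hy⟩ := hy
        exact Submodule.subset_span ⟨_, hx.lie hy⟩
      | zero => simp
      | add y z _ _ h₁ h₂ => rw [lie_add]; exact add_mem h₁ h₂
      | smul c y _ h => rw [lie_smul]; exact Submodule.smul_mem _ _ h
    | zero => simp
    | add y z _ _ h₁ h₂ => rw [add_lie]; exact add_mem h₁ h₂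
    | smul c y _ h => rw [smul_lie]; exact Submodule.smul_mem _ _ h
  have hle : LieSubalgebra.lieSpan k L (Set.range e) ≤
      { Submodule.span k {x | ∃ β, IsMono e x β} with lie_mem' := fun {x y} => hm x y } := by
    rw [LieSubalgebra.lieSpan_le]
    rintro _ ⟨i, rfl⟩
    exact Submodule.subset_span ⟨_, IsMono.gen i⟩
  rw [h] at hle
  rw [eq_top_iff]
  intro x _
  have hx : x ∈ Submodule.span k {x | ∃ β, IsMono e x β} := hle (show x ∈ ⊤ by trivial)
  refine (Submodule.span_le.2 ?_) hx
  rintro y ⟨β, hy⟩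
  exact Submodule.mem_iSup_of_mem β (Submodule.subset_span hy)

theorem lie_gen_mem_wtSpace (p : Fin n) {β : Fin n → ℤ} {x : L} (hx : x ∈ wtSpace k e β) :
    ⁅e p, x⁆ ∈ wtSpace k e (β + ee p) := by
  induction hx using Submodule.span_induction with
  | mem x hx => rw [add_comm]; exact Submodule.subset_span ((IsMono.gen p).lie hx)
  | zero => simp
  | add y z _ _ h₁ h₂ => rw [lie_add]; exact add_mem h₁ h₂
  | smul c y _ h => rw [lie_smul]; exact Submodule.smul_mem _ _ h

theorem rank_wtSpace_ee_le (i : Fin n) : Module.rank k (wtSpace k e (ee i)) ≤ 1 := by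
  rw [rank_submodule_le_one_iff']
  refine ⟨e i, Submodule.span_le.2 ?_⟩
  intro x hx
  rcases IsMono.eq_of_support hx i (fun l hl => by simp [ee_apply, hl]) with rfl | ⟨rfl, -⟩
  · exact zero_mem _
  · exact Submodule.mem_span_singleton_self _

theorem eq_ee_of_wtSpace_ne_bot {β : Fin n → ℤ} (h : wtSpace k e β ≠ ⊥) {i : Fin n}
    (hβ : ∀ l, l ≠ i → β l = 0) : β = ee i := by
  obtain ⟨x, h0, hx⟩ := wtSpace_ne_bot h
  rcases hx.eq_of_support i hβ with h | h
  · exact absurd h h0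
  · exact h.2

/-- The derivation acting on the weight space of `β` by the value of the `p`-th coroot. -/
theorem IsSerre.exists_weight_derivation (h : IsSerre (k := k) A e) (p : Fin n) :
    ∃ H : LieDerivation k L L, ∀ x β, IsMono e x β → H x = coroot A p β • x := by
  obtain ⟨H, hH⟩ := h.exists_derivation (fun i => A p i • e i) (by
    intro i j hij
    refine ⟨fun m => (m * A p i + A p j) • (LieAlgebra.ad k L (e i) ^ m) (e j), by simp, ?_, ?_⟩
    · intro m
      simp only [lie_zsmul, pow_succ', Module.End.mul_apply, LieAlgebra.ad_apply]
      rw [← lie_skew (e i)]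
      push_cast
      module
    · simp only [h.rel i j hij, smul_zero])
  refine ⟨H, fun x β hx => ?_⟩
  induction hx with
  | gen i => rw [hH, coroot_ee]
  | @lie x y β γ _ _ h₁ h₂ =>
    rw [LieDerivation.apply_lie_eq_sub, h₁, h₂, coroot_add, lie_zsmul, lie_zsmul, ← lie_skew x y]
    module

/-- The derivation lowering weights by the `p`-th simple root. -/
theorem IsSerre.exists_lowering (h : IsSerre (k := k) A e)
    (hzero : ∀ i j, A i j = 0 ↔ A j i = 0) (hdiag : ∀ i, A i i = 2)
    (hoff : ∀ i j, i ≠ j → A i j ≤ 0) (p : Fin n) (H : LieDerivation k L L)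
    (hH : ∀ x β, IsMono e x β → H x = coroot A p β • x) :
    ∃ D : LieDerivation k L (DerExt H), ∀ i, D (e i) = ⟨0, if i = p then -1 else 0⟩ := by
  have hmono : ∀ i j (m : ℕ),
      IsMono e ((LieAlgebra.ad k L (e i) ^ m) (e j)) ((m : ℤ) • ee i + ee j) := by
    intro i j m
    induction m with
    | zero => simpa using IsMono.gen j
    | succ m ih =>
      rw [pow_succ', Module.End.mul_apply, LieAlgebra.ad_apply]
      convert (IsMono.gen i).lie ih using 1
      push_cast; module
  have hHm : ∀ i j (m : ℕ), H ((LieAlgebra.ad k L (e i) ^ m) (e j)) =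
      (m * A p i + A p j) • (LieAlgebra.ad k L (e i) ^ m) (e j) := by
    intro i j m
    rw [hH _ _ (hmono i j m), coroot_add, coroot_smul, coroot_ee, coroot_ee]
  refine h.exists_derivation _ ?_
  intro i j hij
  obtain ⟨N, hN⟩ : ∃ N : ℕ, A i j = -N := ⟨(-A i j).toNat, by have := hoff i j hij; omega⟩
  have hN' : (1 - A i j).toNat = N + 1 := by omega
  rw [hN']
  by_cases hip : i = p
  · subst hip
    refine ⟨fun m => Nat.casesOn m 0 (fun m =>
      ⟨(-((m + 1) * (A i j + m)) : ℤ) • (LieAlgebra.ad k L (e i) ^ m) (e j), 0⟩), ?_, ?_, ?_⟩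
    · simp only [if_neg hij.symm]; rfl
    · rintro (_ | m)
      · ext <;> simp [hH _ _ (IsMono.gen j), coroot_ee]
      · ext
        · simp only [DerExt.fst_sub, DerExt.fst_lie, hHm, hdiag, if_true, lie_zero]
          simp only [pow_succ', Module.End.mul_apply, LieAlgebra.ad_apply, lie_zsmul]
          push_cast
          module
        · simp
    · ext
      · simp [hN]
      · simp
  · by_cases hjp : j = p
    · subst hjp
      refine ⟨fun m => Nat.casesOn m ⟨0, -1⟩ (fun m => Nat.casesOn m ⟨A j i • e i, 0⟩
        (fun _ => 0)), by simp, ?_, ?_⟩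
      · rintro (_ | _ | m)
        · ext <;> simp [hij, hH _ _ (IsMono.gen i), coroot_ee]
        · ext <;> simp [hij]
        · ext <;> simp [hij]
      · rcases N with _ | N
        · have : A j i = 0 := (hzero i j).1 (by simpa using hN)
          ext <;> simp [this]
        · rfl
    · refine ⟨fun _ => 0, ?_, ?_, rfl⟩
      · simp only [if_neg hjp]; rfl
      · intro m
        ext <;> simp [hip]

end Weights

section Weights

universe u

variable {k L : Type u} [Field k] [LieRing L] [LieAlgebra k L] {n : ℕ}
  {A : Matrix (Fin n) (Fin n) ℤ} {e : Fin n → L}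

theorem IsSerre.exists_ad_pow_eq_zero (h : IsSerre (k := k) A e) (p : Fin n) (x : L) :
    ∃ N : ℕ, (LieAlgebra.ad k L (e p) ^ N) x = 0 := by
  have hle : LieSubalgebra.lieSpan k L (Set.range e) ≤ LieSubalgebra.engel k (e p) := by
    rw [LieSubalgebra.lieSpan_le]
    rintro _ ⟨j, rfl⟩
    rw [SetLike.mem_coe, LieSubalgebra.mem_engel_iff]
    by_cases hj : p = j
    · exact ⟨1, by simp [hj]⟩
    · exact ⟨_, h.rel p j hj⟩
  rw [h.span] at hle
  exact (LieSubalgebra.mem_engel_iff k (e p) x).1 (hle trivial)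

/-- The raising and lowering operators attached to a simple root. -/
theorem IsSerre.exists_lowering_operator (h : IsSerre (k := k) A e)
    (hzero : ∀ i j, A i j = 0 ↔ A j i = 0) (hdiag : ∀ i, A i i = 2)
    (hoff : ∀ i j, i ≠ j → A i j ≤ 0) (p : Fin n) :
    e p ≠ 0 ∧ ∃ D : Module.End k L, (∀ β, ∀ x ∈ wtSpace k e β, D x ∈ wtSpace k e (β - ee p)) ∧
      ∀ β, β ≠ ee p → ∀ x ∈ wtSpace k e β, D ⁅e p, x⁆ = ⁅e p, D x⁆ - (coroot A p β : k) • x := by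
  obtain ⟨H, hH⟩ := h.exists_weight_derivation p
  obtain ⟨D, hD⟩ := h.exists_lowering hzero hdiag hoff p H hH
  have h0 : ∀ {x β}, IsMono e x β → (D x).snd = 0 ∨ β = ee p := by
    intro x β hx
    cases hx with
    | gen i =>
      by_cases hi : i = p
      · exact Or.inr (by rw [hi])
      · exact Or.inl (by rw [hD]; simp [hi])
    | lie h₁ h₂ => left; rw [LieDerivation.apply_lie_eq_sub]; simp
  let D' : Module.End k L := ⟨⟨fun x => (D x).fst, by simp⟩, by simp⟩
  have hD' : ∀ x, D' x = (D x).fst := fun _ => rfl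
  have hlie : ∀ x y, D' ⁅x, y⁆ = ⁅x, D' y⁆ - (D y).snd • H x - (⁅y, D' x⁆ - (D x).snd • H y) := by
    intro x y
    rw [hD', LieDerivation.apply_lie_eq_sub]
    simp [hD']
  have hHmem : ∀ {x β}, IsMono e x β → H x ∈ wtSpace k e β := by
    intro x β hx
    rw [hH _ _ hx]
    exact zsmul_mem (show x ∈ wtSpace k e β from Submodule.subset_span hx) _
  have hbr : ∀ {x y β γ}, IsMono e x β → y ∈ wtSpace k e γ → ⁅x, y⁆ ∈ wtSpace k e (β + γ) := by
    intro x y β γ hx hy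
    induction hy using Submodule.span_induction with
    | mem y hy => exact Submodule.subset_span (hx.lie hy)
    | zero => simp
    | add y z _ _ h₁ h₂ => rw [lie_add]; exact add_mem h₁ h₂
    | smul c y _ h => rw [lie_smul]; exact Submodule.smul_mem _ _ h
  refine ⟨fun he => ?_, D', ?_, ?_⟩
  · have := hD p
    rw [he] at this
    simpa using congrArg DerExt.snd this
  · have key : ∀ x β, IsMono e x β → D' x ∈ wtSpace k e (β - ee p) := by
      intro x β hx
      induction hx with
      | gen i => rw [hD', hD]; exact zero_mem _
      | @lie x y β γ hx hy h₁ h₂ =>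
        have aux : ∀ {x y β γ}, IsMono e x β → IsMono e y γ → D' y ∈ wtSpace k e (γ - ee p) →
            ⁅x, D' y⁆ - (D y).snd • H x ∈ wtSpace k e (β + γ - ee p) := by
          intro x y β γ hx hy hy'
          refine sub_mem ?_ ?_
          · rw [add_sub_assoc]; exact hbr hx hy'
          · rcases h0 hy with h | rfl
            · rw [h, zero_smul]; exact zero_mem _
            · rw [add_sub_cancel_right]; exact Submodule.smul_mem _ _ (hHmem hx)
        rw [hlie]
        refine sub_mem (aux hx hy h₂) ?_
        rw [add_comm β]
        exact aux hy hx h₁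
    intro β x hx
    induction hx using Submodule.span_induction with
    | mem x hx => exact key x β hx
    | zero => rw [map_zero]; exact zero_mem _
    | add y z _ _ h₁ h₂ => rw [map_add]; exact add_mem h₁ h₂
    | smul c y _ h => rw [map_smul]; exact Submodule.smul_mem _ _ h
  · intro β hβ x hx
    induction hx using Submodule.span_induction with
    | mem x hx =>
      have hx0 := (h0 hx).resolve_right hβ
      rw [hlie, hx0, hD', hD', hD, hH _ _ hx]
      simp [Int.cast_smul_eq_zsmul]
    | zero => simp
    | add y z _ _ h₁ h₂ => simp only [lie_add, map_add, h₁, h₂, smul_add]; abel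
    | smul c y _ h => simp only [lie_smul, map_smul, h, smul_sub, smul_comm c]

theorem IsSerre.rank_wtSpace_le_refl [CharZero k] (h : IsSerre (k := k) A e)
    (hzero : ∀ i j, A i j = 0 ↔ A j i = 0) (hdiag : ∀ i, A i i = 2)
    (hoff : ∀ i j, i ≠ j → A i j ≤ 0) (p : Fin n) {β : Fin n → ℤ} (hβ : β ≠ ee p) :
    Module.rank k (wtSpace k e β) ≤ Module.rank k (wtSpace k e (refl A p β)) := by
  by_cases hbot : wtSpace k e β = ⊥
  · rw [hbot]; simp
  have hstr : ∀ t : ℤ, β + t • ee p ≠ ee p := by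
    intro t ht
    apply hβ
    apply eq_ee_of_wtSpace_ne_bot hbot
    intro l hl
    have := congrFun ht l
    simpa [ee_apply, hl] using this
  obtain ⟨-, D, hD, hrel⟩ := h.exists_lowering_operator hzero hdiag hoff p
  set E : Module.End k L := LieAlgebra.ad k L (e p) with hE
  have hEx : ∀ x, E x = ⁅e p, x⁆ := fun _ => rfl
  let P : ℤ → Submodule k L := fun t => wtSpace k e (β + t • ee p)
  have hPE : ∀ t, ∀ x ∈ P t, E x ∈ P (t + 1) := by
    intro t x hx
    have := lie_gen_mem_wtSpace p hx
    rwa [show β + t • ee p + ee p = β + (t + 1) • ee p by module] at this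
  have hPD : ∀ t, ∀ x ∈ P t, D x ∈ P (t - 1) := by
    intro t x hx
    have := hD _ x hx
    rwa [show β + t • ee p - ee p = β + (t - 1) • ee p by module] at this
  have hPE' : ∀ (s : ℕ) t, ∀ x ∈ P t, (E ^ s) x ∈ P (t + s) := by
    intro s t x hx
    induction s with
    | zero => simpa using hx
    | succ s ih => rw [pow_succ']; have := hPE _ _ ih; push_cast; rwa [← add_assoc]
  have hPD' : ∀ (s : ℕ) t, ∀ x ∈ P t, (D ^ s) x ∈ P (t - s) := by
    intro s t x hx
    induction s with
    | zero => simpa using hx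
    | succ s ih => rw [pow_succ']; have := hPD _ _ ih; push_cast; rwa [← sub_sub]
  set c := coroot A p β with hc
  have hcom : ∀ t, ∀ x ∈ P t, D (E x) = E (D x) - ((c + 2 * t : ℤ) : k) • x := by
    intro t x hx
    rw [hEx, hrel _ (hstr t) x hx, coroot_add, coroot_smul, coroot_ee, hdiag, mul_comm t]
    rfl
  have hED : ∀ t, ∀ x ∈ P t, ∀ s : ℕ, E ((D ^ (s + 1)) x) =
      (D ^ (s + 1)) (E x) + ((s + 1 : k) * (((c + 2 * t : ℤ) : k) - s)) • (D ^ s) x := by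
    intro t x hx s
    induction s with
    | zero => simp [hcom t x hx]
    | succ s ih =>
      have h1 := hcom _ _ (hPD' (s + 1) t x hx)
      rw [pow_succ' D (s + 1), Module.End.mul_apply,
        show E (D ((D ^ (s + 1)) x)) = D (E ((D ^ (s + 1)) x)) +
        ((c + 2 * (t - (s + 1 : ℕ)) : ℤ) : k) • (D ^ (s + 1)) x by rw [h1]; abel, ih, map_add,
        map_smul, ← Module.End.mul_apply D, ← Module.End.mul_apply D, ← pow_succ', ← pow_succ']
      push_cast
      module
  have hDE : ∀ t, ∀ x ∈ P t, ∀ s : ℕ, D ((E ^ (s + 1)) x) =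
      (E ^ (s + 1)) (D x) + ((s + 1 : k) * (-((c + 2 * t : ℤ) : k) - s)) • (E ^ s) x := by
    intro t x hx s
    induction s with
    | zero => simp [hcom t x hx]; module
    | succ s ih =>
      have h1 := hcom _ _ (hPE' (s + 1) t x hx)
      rw [pow_succ' E (s + 1), Module.End.mul_apply, h1, ih, map_add, map_smul,
        ← Module.End.mul_apply E, ← Module.End.mul_apply E, ← pow_succ', ← pow_succ']
      push_cast
      module
  have hx0 : ∀ x ∈ wtSpace k e β, x ∈ P 0 := by intro x hx; simpa [P] using hx
  have tf : ∀ (a : k) (x : L), a ≠ 0 → a • x = 0 → x = 0 := fun a x ha h =>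
    (smul_eq_zero.1 h).resolve_left ha
  rcases le_total 0 c with hc0 | hc0
  · obtain ⟨m, hm⟩ := Int.eq_ofNat_of_zero_le hc0
    have hmem : ∀ x ∈ wtSpace k e β, (D ^ m) x ∈ wtSpace k e (refl A p β) := by
      intro x hx
      have := hPD' m 0 x (hx0 x hx)
      simp only [P] at this
      rwa [show β + (0 - (m : ℤ)) • ee p = refl A p β by rw [refl, ← hc, hm]; module] at this
    refine LinearMap.rank_le_of_injective ((D ^ m).restrict hmem) ?_
    rw [← LinearMap.ker_eq_bot, LinearMap.ker_eq_bot']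
    rintro ⟨x, hx⟩ hxm
    have hxm' : (D ^ m) x = 0 := congrArg Subtype.val hxm
    obtain ⟨N, hN⟩ := h.exists_ad_pow_eq_zero p x
    refine Subtype.ext (eq_zero_of_pow_eq_zero tf E D P (fun t => c + 2 * t) (fun t => by ring) hPE
      ?_ N m 0 x (hx0 x hx) (by simpa using hm) hN hxm')
    intro t x hx s
    refine ⟨1, _, one_ne_zero, fun hs => ?_, by rw [one_smul]; exact hED t x hx s⟩
    refine mul_ne_zero (by exact_mod_cast s.succ_ne_zero) (sub_ne_zero.2 ?_)
    have : c + 2 * t ≠ (s : ℤ) := by omega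
    exact_mod_cast this
  · obtain ⟨m, hm⟩ := Int.exists_eq_neg_ofNat hc0
    have hmem : ∀ x ∈ wtSpace k e β, (E ^ m) x ∈ wtSpace k e (refl A p β) := by
      intro x hx
      have := hPE' m 0 x (hx0 x hx)
      simp only [P] at this
      rwa [show β + (0 + (m : ℤ)) • ee p = refl A p β by rw [refl, ← hc, hm]; module] at this
    refine LinearMap.rank_le_of_injective ((E ^ m).restrict hmem) ?_
    rw [← LinearMap.ker_eq_bot, LinearMap.ker_eq_bot']
    rintro ⟨x, hx⟩ hxm
    have hxm' : (E ^ m) x = 0 := congrArg Subtype.val hxm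
    have hN : (D ^ ((β p).toNat + 1)) x = 0 := by
      have := hPD' ((β p).toNat + 1) 0 x (hx0 x hx)
      have hneg : (β + (0 - (((β p).toNat + 1 : ℕ) : ℤ)) • ee p) p < 0 := by
        simp [ee_apply]; omega
      simp only [P] at this
      rw [wtSpace_eq_bot_of_neg hneg] at this
      exact this
    refine Subtype.ext (eq_zero_of_pow_eq_zero tf D E (fun t => P (-t)) (fun t => -c + 2 * t)
      (fun t => by ring) (fun t x hx => by
        have := hPD _ x hx; rwa [show -t - 1 = -(t + 1) by ring] at this)
      ?_ _ m 0 x (by simpa using hx0 x hx) (by simp [hm]) hN hxm')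
    intro t x hx s
    refine ⟨1, _, one_ne_zero, fun hs => ?_, by rw [one_smul]; exact hDE (-t) x hx s⟩
    refine mul_ne_zero (by exact_mod_cast s.succ_ne_zero) (sub_ne_zero.2 ?_)
    have : -(c + 2 * (-t)) ≠ (s : ℤ) := by omega
    exact_mod_cast this

end Weights

section Reflections

variable {n : ℕ} (A : Matrix (Fin n) (Fin n) ℤ)

theorem refl_add (p : Fin n) (β γ : Fin n → ℤ) :
    refl A p (β + γ) = refl A p β + refl A p γ := by
  simp only [refl, coroot_add]; module

variable {A}

theorem refl_refl (hdiag : ∀ i, A i i = 2) (p : Fin n) (β : Fin n → ℤ) :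
    refl A p (refl A p β) = β := by
  have : coroot A p (refl A p β) = -coroot A p β := by
    have h := coroot_add A p (refl A p β) (coroot A p β • ee p)
    rw [coroot_smul, coroot_ee, hdiag, refl, sub_add_cancel] at h
    rw [refl]
    linarith
  rw [refl, this, refl]
  module

theorem refl_ee (hdiag : ∀ i, A i i = 2) (p : Fin n) : refl A p (ee p) = -ee p := by
  rw [refl, coroot_ee, hdiag]; module

variable (A)

/-- The action of the Weyl group word `w` on the root lattice, last letter first. -/
def actR (w : List (Fin n)) : (Fin n → ℤ) →+ (Fin n → ℤ) :=
  w.foldr (fun p φ => (AddMonoidHom.mk' (refl A p) (refl_add A p)).comp φ) (AddMonoidHom.id _)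

/-- The action of the Weyl group word `w` on the root lattice, first letter first. -/
def actL (w : List (Fin n)) (β : Fin n → ℤ) : Fin n → ℤ := w.foldl (fun β p => refl A p β) β

@[simp] theorem actR_cons (p : Fin n) (w : List (Fin n)) (β : Fin n → ℤ) :
    actR A (p :: w) β = refl A p (actR A w β) := rfl

theorem actR_append (v w : List (Fin n)) (β : Fin n → ℤ) :
    actR A (v ++ w) β = actR A v (actR A w β) := by
  induction v with
  | nil => rfl
  | cons p v ih => simp [ih]

@[simp] theorem actL_nil (β : Fin n → ℤ) : actL A [] β = β := rfl
@[simp] theorem actL_cons (p : Fin n) (w : List (Fin n)) (β : Fin n → ℤ) :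
    actL A (p :: w) β = actL A w (refl A p β) := rfl

theorem actL_append (v w : List (Fin n)) (β : Fin n → ℤ) :
    actL A (v ++ w) β = actL A w (actL A v β) := by
  simp [actL, List.foldl_append]

variable {A}

theorem actR_actL (hdiag : ∀ i, A i i = 2) (w : List (Fin n)) (β : Fin n → ℤ) :
    actR A w (actL A w β) = β := by
  induction w generalizing β with
  | nil => rfl
  | cons p w ih => rw [actR_cons, actL_cons, ih, refl_refl hdiag]

theorem actR_nonpos {w : List (Fin n)} (h : ∀ j l, actR A w (ee j) l ≤ 0) {β : Fin n → ℤ}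
    (hβ : ∀ l, 0 ≤ β l) (l : Fin n) : actR A w β l ≤ 0 := by
  have : β = ∑ j, β j • ee j := by
    ext l; simp [ee_apply]
  rw [this, map_sum, Finset.sum_apply]
  refine Finset.sum_nonpos fun j _ => ?_
  rw [map_zsmul, Pi.smul_apply, smul_eq_mul]
  exact mul_nonpos_of_nonneg_of_nonpos (hβ j) (h j l)

end Reflections

/-- A word all of whose infixes produce elements of `Δ`. -/
def GoodWord {n : ℕ} (A : Matrix (Fin n) (Fin n) ℤ) (Δ : Set (Fin n → ℤ)) (w : List (Fin n)) :
    Prop :=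
  ∀ x i y t, w = x ++ i :: y ++ t → actL A y (ee i) ∈ Δ

section Greedy

variable {k L : Type*} [Field k] [AddCommGroup L] [Module k L] {n : ℕ}
  {A : Matrix (Fin n) (Fin n) ℤ} {W : (Fin n → ℤ) → Submodule k L}

theorem reflected_or_mem (hdiag : ∀ i, A i i = 2)
    (hone : ∀ i, Module.rank k (W (ee i)) ≤ 1)
    (hrefl : ∀ i β, β ≠ ee i → Module.rank k (W β) ≤ Module.rank k (W (refl A i β)))
    (w : List (Fin n)) : ∀ β, W β ≠ ⊥ →
      (∃ x i y, w = x ++ i :: y ∧ β = actL A y (ee i) ∧ Module.rank k (W β) ≤ 1) ∨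
        W (actR A w β) ≠ ⊥ := by
  induction w using List.reverseRecOn with
  | nil => intro β h; exact Or.inr h
  | append_singleton w j ih =>
    intro β h
    by_cases hj : β = ee j
    · subst hj
      exact Or.inl ⟨w, j, [], rfl, rfl, hone j⟩
    have hr := hrefl j β hj
    have hne : W (refl A j β) ≠ ⊥ := by
      intro hb
      rw [hb, rank_bot, nonpos_iff_eq_zero, Submodule.rank_eq_zero] at hr
      exact h hr
    rcases ih _ hne with ⟨x, i, y, rfl, hy, h1⟩ | h'
    · refine Or.inl ⟨x, i, y ++ [j], by simp, ?_, hr.trans h1⟩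
      rw [actL_append, ← hy, actL_cons, refl_refl hdiag, actL_nil]
    · right
      rwa [actR_append]

theorem exists_goodWord (hdiag : ∀ i, A i i = 2) (htop : ⨆ β, W β = ⊤)
    (hpos : ∀ β, W β ≠ ⊥ → (∀ l, 0 ≤ β l) ∧ β ≠ 0) (hee : ∀ i, W (ee i) ≠ ⊥)
    (hone : ∀ i, Module.rank k (W (ee i)) ≤ 1)
    (hrefl : ∀ i β, β ≠ ee i → Module.rank k (W β) ≤ Module.rank k (W (refl A i β))) (N : ℕ) :
    ∃ w, GoodWord A {β | W β ≠ ⊥} w ∧ (w.length = N ∨ Module.rank k L ≤ w.length) := by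
  induction N with
  | zero => exact ⟨[], by intro x i y t h; simp at h, Or.inl rfl⟩
  | succ N ih =>
    obtain ⟨w, hw, hN | hN⟩ := ih
    swap
    · exact ⟨w, hw, Or.inr hN⟩
    by_cases hex : ∃ j, ∀ x i y, w = x ++ i :: y → actL A y (ee i) ≠ ee j
    · obtain ⟨j, hj⟩ := hex
      refine ⟨w ++ [j], ?_, Or.inl (by simp [hN])⟩
      intro x i y t h
      rcases List.eq_nil_or_concat t with rfl | ⟨t, b, rfl⟩
      · rcases List.eq_nil_or_concat y with rfl | ⟨y, c, rfl⟩
        · exact hee i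
        · have h' : w ++ [j] = (x ++ i :: y) ++ [c] := by simpa using h
          obtain ⟨hw', hc⟩ := List.append_inj' h' rfl
          obtain rfl : j = c := by simpa using hc
          have hne : W (actL A y (ee i)) ≠ ⊥ := hw x i y [] (by simpa using hw')
          have hr := hrefl j _ (hj x i y hw')
          rw [List.concat_eq_append, actL_append, actL_cons, actL_nil]
          intro hb
          rw [hb, rank_bot, nonpos_iff_eq_zero, Submodule.rank_eq_zero] at hr
          exact hne hr
      · have h' : w ++ [j] = (x ++ i :: y ++ t) ++ [b] := by simpa using h
        exact hw x i y t (List.append_inj' h' rfl).1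
    · push Not at hex
      refine ⟨w, hw, Or.inr ?_⟩
      have hmem : ∀ x i y, w = x ++ i :: y → W (actR A x (ee i)) ≠ ⊥ := by
        rintro x i y rfl
        refine (reflected_or_mem hdiag hone hrefl x (ee i) (hee i)).resolve_left ?_
        rintro ⟨x', i', y', rfl, hy, -⟩
        have := hw x' i' (y' ++ [i]) y (by simp)
        rw [actL_append, ← hy, actL_cons, actL_nil, refl_ee hdiag] at this
        have := (hpos _ this).1 i
        simp [ee_apply] at this
      have hneg : ∀ j l, actR A w (ee j) l ≤ 0 := by
        intro j l
        obtain ⟨x, i, y, hxy, hj⟩ := hex j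
        rw [← hj, hxy, actR_append, actR_cons, actR_actL hdiag, refl_ee hdiag, map_neg,
          Pi.neg_apply, neg_nonpos]
        exact (hpos _ (hmem x i y hxy)).1 l
      have hall : ∀ β, W β ≠ ⊥ → ∃ x i y, w = x ++ i :: y ∧ β = actL A y (ee i) ∧
          Module.rank k (W β) ≤ 1 := by
        intro β hβ
        refine (reflected_or_mem hdiag hone hrefl w β hβ).resolve_right fun h => ?_
        refine (hpos _ h).2 (funext fun l => ?_)
        exact le_antisymm (actR_nonpos hneg (hpos _ hβ).1 l) ((hpos _ h).1 l)
      have hline : ∀ β, ∃ v : L, Module.rank k (W β) ≤ 1 → W β ≤ Submodule.span k {v} := by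
        intro β
        by_cases h : Module.rank k (W β) ≤ 1
        · obtain ⟨v, hv⟩ := (rank_submodule_le_one_iff' _).1 h
          exact ⟨v, fun _ => hv⟩
        · exact ⟨0, fun h' => absurd h' h⟩
      choose v hv using hline
      let g : Fin w.length → L := fun p => v (actL A (w.drop (p + 1)) (ee (w.get p)))
      have hspan : Submodule.span k (Set.range g) = ⊤ := by
        rw [eq_top_iff, ← htop, iSup_le_iff]
        intro β
        by_cases hβ : W β = ⊥
        · rw [hβ]; exact bot_le
        · obtain ⟨x, i, y, hxy, hβy, h1⟩ := hall β hβ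
          refine (hv β h1).trans (Submodule.span_mono ?_)
          rw [Set.singleton_subset_iff]
          refine ⟨⟨x.length, by simp [hxy]⟩, ?_⟩
          simp only [g]
          subst hxy
          rw [hβy]
          congr 2
          · simp
          · simp
      rw [← rank_top, ← hspan]
      refine (rank_span_le _).trans ?_
      have := Cardinal.mk_range_le_lift (f := g)
      simpa using this

end Greedy

section SerreElements

variable {R B : Type*} [CommRing R] [Ring B] [Algebra R B]

/-- Iterated braided commutators of `X` with `Y`, for the braiding `p`, `c`. -/
def serreElt (p c : R) (X Y : B) : ℕ → B
  | 0 => Y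
  | m + 1 => X * serreElt p c X Y m - (p ^ m * c) • (serreElt p c X Y m * X)

/-- The `q`-integers. -/
def qInt (p : R) (m : ℕ) : R := ∑ t ∈ Finset.range m, p ^ t

theorem qInt_succ (p : R) (m : ℕ) : qInt p (m + 1) = qInt p m + p ^ m :=
  Finset.sum_range_succ _ _

theorem qInt_succ' (p : R) (m : ℕ) : qInt p (m + 1) = p * qInt p m + 1 := by
  rw [qInt, Finset.sum_range_succ', qInt, Finset.mul_sum]
  simp [pow_succ']

variable (p c : R) (X Y : B)

theorem serreElt_comm {E : B} {a b : R} (hX : E * X = a • (X * E)) (hY : E * Y = b • (Y * E))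
    (m : ℕ) : E * serreElt p c X Y m = (a ^ m * b) • (serreElt p c X Y m * E) := by
  induction m with
  | zero => simpa [serreElt] using hY
  | succ m ih =>
    simp only [serreElt]
    set S := serreElt p c X Y m
    rw [mul_sub, ← mul_assoc, hX, mul_smul_comm, ← mul_assoc E, ih, smul_mul_assoc, mul_assoc X,
      ih, smul_mul_assoc, mul_assoc S, hX]
    simp only [sub_mul, mul_smul_comm, smul_mul_assoc, mul_assoc]
    module

theorem pow_mul_comm_of_smul {T : B} {a : R} (hX : T * X = a • (X * T)) (m : ℕ) :
    T * X ^ m = a ^ m • (X ^ m * T) := by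
  induction m with
  | zero => simp
  | succ m ih =>
    rw [pow_succ, ← mul_assoc, ih, smul_mul_assoc, mul_assoc, hX, mul_smul_comm, smul_smul,
      mul_assoc, pow_succ]

theorem serreElt_raise_self {E T : B} {c' : R} (hX : E * X = p • (X * E) + 1 - T)
    (hY : E * Y = c' • (Y * E)) (hTX : T * X = p ^ 2 • (X * T)) (hTY : T * Y = (c * c') • (Y * T))
    (m : ℕ) : E * serreElt p c X Y (m + 1) = (p ^ (m + 1) * c') • (serreElt p c X Y (m + 1) * E) +
      (qInt p (m + 1) * (1 - p ^ m * (c * c'))) • serreElt p c X Y m := by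
  have key : ∀ m, ∀ Z : B, ∀ g : R,
      E * serreElt p c X Y m = (p ^ m * c') • (serreElt p c X Y m * E) + g • Z →
      E * serreElt p c X Y (m + 1) = (p ^ (m + 1) * c') • (serreElt p c X Y (m + 1) * E) +
        (1 - p ^ (2 * m) * (c * c')) • serreElt p c X Y m +
        g • (p • (X * Z) - (p ^ m * c) • (Z * X)) := by
    intro m Z g h
    have hT := serreElt_comm p c X Y hTX hTY m
    simp only [serreElt]
    set S := serreElt p c X Y m
    rw [mul_sub, ← mul_assoc, hX, mul_smul_comm, ← mul_assoc E, h]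
    simp only [sub_mul, add_mul, one_mul, smul_mul_assoc, mul_assoc]
    rw [h, hX, hT]
    simp only [mul_add, mul_sub, mul_one, mul_smul_comm]
    module
  induction m with
  | zero =>
    rw [key 0 0 0 (by simpa [serreElt] using hY)]
    simp [qInt]
  | succ m ih =>
    rw [key (m + 1) _ _ ih]
    have e : p • (X * serreElt p c X Y m) - (p ^ (m + 1) * c) • (serreElt p c X Y m * X) =
        p • serreElt p c X Y (m + 1) := by
      simp only [serreElt]; module
    rw [e, qInt_succ' p (m + 1)]
    have h2 := (qInt_succ p (m + 1)).symm.trans (qInt_succ' p (m + 1))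
    match_scalars
    · ring
    · linear_combination (-(p ^ (m + 1) * (c * c'))) * h2

theorem serreElt_raise_other {E T : B} {b c' : R} (hX : E * X = c • (X * E))
    (hY : E * Y = b • (Y * E) + 1 - T) (hTX : T * X = c' • (X * T)) (m : ℕ) :
    E * serreElt p c X Y m = (c ^ m * b) • (serreElt p c X Y m * E) +
      (c ^ m * ∏ s ∈ Finset.range m, (1 - p ^ s)) • X ^ m -
      (c ^ m * ∏ s ∈ Finset.range m, (1 - p ^ s * c')) • (X ^ m * T) := by
  induction m with
  | zero => simp [serreElt, hY]
  | succ m ih =>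
    simp only [serreElt]
    set S := serreElt p c X Y m
    rw [mul_sub, ← mul_assoc, hX, mul_smul_comm, ← mul_assoc E, smul_mul_assoc, mul_assoc X, ih]
    simp only [sub_mul, add_mul, mul_add, mul_sub, smul_mul_assoc, mul_smul_comm, mul_assoc, hX,
      hTX, ← pow_succ, ← pow_succ']
    rw [← mul_assoc (X ^ m) X T, ← pow_succ, ← mul_assoc X (X ^ m), ← pow_succ',
      Finset.prod_range_succ, Finset.prod_range_succ]
    module

theorem raise_pow {E T : B} (hX : E * X = p • (X * E) + 1 - T) (hTX : T * X = p ^ 2 • (X * T))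
    (s : ℕ) : E * X ^ (s + 1) = p ^ (s + 1) • (X ^ (s + 1) * E) +
      qInt p (s + 1) • X ^ s - (qInt p (s + 1) * p ^ s) • (X ^ s * T) := by
  induction s with
  | zero => simp [qInt, hX]
  | succ s ih =>
    have hT := pow_mul_comm_of_smul X hTX (s + 1)
    have h2 := (qInt_succ p (s + 1)).symm.trans (qInt_succ' p (s + 1))
    rw [pow_succ' X (s + 1), ← mul_assoc, hX, sub_mul, add_mul, smul_mul_assoc, mul_assoc, ih, hT]
    simp only [mul_add, mul_sub, mul_smul_comm, one_mul, ← mul_assoc, ← pow_succ']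
    rw [qInt_succ' p (s + 1)]
    match_scalars
    · ring
    · ring
    · linear_combination (-(p ^ (s + 1))) * h2

theorem pow_raise {E T : B} {p' : R} (hp : p' * p = 1) (hX : E * X = p • (X * E) + 1 - T)
    (hTE : T * E = p' ^ 2 • (E * T)) (s : ℕ) :
    E ^ (s + 1) * X = p ^ (s + 1) • (X * E ^ (s + 1)) +
      qInt p (s + 1) • E ^ s - (qInt p (s + 1) * p' ^ s) • (E ^ s * T) := by
  induction s with
  | zero => simp [qInt, hX]
  | succ s ih =>
    have h2 := (qInt_succ p (s + 1)).symm.trans (qInt_succ' p (s + 1))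
    have hpp : p' ^ (s + 1) * p ^ (s + 1) = 1 := by rw [← mul_pow, hp, one_pow]
    rw [pow_succ E (s + 1), mul_assoc, hX]
    simp only [mul_add, mul_sub, mul_smul_comm, mul_one, ← mul_assoc]
    rw [ih]
    simp only [add_mul, sub_mul, smul_mul_assoc, mul_assoc, hTE, ← pow_succ, mul_smul_comm]
    rw [← mul_assoc (E ^ s), ← pow_succ, qInt_succ' p (s + 1)]
    match_scalars
    · ring
    · ring
    · linear_combination (-(p' ^ (s + 1))) * h2 + hpp - qInt p (s + 1) * p' ^ (s + 1) * hp

end SerreElements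

/-- A generalized Cartan matrix with symmetrizer, together with a braiding matrix of Cartan type
whose parameter is not a root of unity. -/
structure QDatum (R : Type*) [CommRing R] (n : ℕ) where
  A : Matrix (Fin n) (Fin n) ℤ
  d : Fin n → ℤ
  v : Rˣ
  Q : Fin n → Fin n → Rˣ
  diag : ∀ i, A i i = 2
  off : ∀ i j, i ≠ j → A i j ≤ 0
  pos : ∀ i, 0 < d i
  symm : ∀ i j, d i * A i j = d j * A j i
  self : ∀ i, Q i i = v ^ d i
  mul_flip : ∀ i j, i ≠ j → Q i j * Q j i = v ^ (d i * A i j)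
  free : ∀ z : ℤ, z ≠ 0 → v ^ z ≠ 1

/-- The underlying module of the quantum shuffle algebra. -/
abbrev Sh (R : Type*) (n : ℕ) := List (Fin n) → R

section Basic

variable {R : Type*} [CommRing R] {n : ℕ}

/-- The weight of a word. -/
def wt (u : List (Fin n)) : Fin n → ℤ := (u.map ee).sum

@[simp] theorem wt_nil : wt ([] : List (Fin n)) = 0 := rfl
@[simp] theorem wt_cons (i : Fin n) (u : List (Fin n)) : wt (i :: u) = ee i + wt u := by
  simp [wt]

theorem wt_nonneg (u : List (Fin n)) (l : Fin n) : 0 ≤ wt u l := by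
  induction u with
  | nil => simp
  | cons i u ih =>
    have : 0 ≤ ee i l := by rw [ee_apply]; split_ifs <;> simp
    rw [wt_cons]; exact add_nonneg this ih

/-- The skew derivation removing a first letter `i`. -/
def raise (i : Fin n) : Module.End R (Sh R n) := LinearMap.funLeft R R (List.cons i)

@[simp] theorem raise_apply (i : Fin n) (x : Sh R n) (u : List (Fin n)) :
    raise i x u = x (i :: u) := rfl

theorem sh_ext {x y : Sh R n} (h0 : x [] = y []) (h : ∀ i, raise i x = raise i y) : x = y := by
  funext u
  cases u with
  | nil => exact h0
  | cons i u => exact congrFun (h i) u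

/-- The elements of weight `β`. -/
def wtSh (R : Type*) [CommRing R] {n : ℕ} (β : Fin n → ℤ) : Submodule R (Sh R n) where
  carrier := {x | ∀ u, wt u ≠ β → x u = 0}
  add_mem' := fun hx hy u hu => by simp [hx u hu, hy u hu]
  zero_mem' := fun _ _ => rfl
  smul_mem' := fun c x hx u hu => by simp [hx u hu]

theorem raise_mem_wtSh {i : Fin n} {β : Fin n → ℤ} {x : Sh R n} (hx : x ∈ wtSh R β) :
    raise i x ∈ wtSh R (β - ee i) := by
  intro u hu
  refine hx (i :: u) fun h => hu ?_
  rw [← h, wt_cons]; abel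

theorem eq_zero_of_mem_wtSh {β : Fin n → ℤ} {x : Sh R n} (hx : x ∈ wtSh R β) {l : Fin n}
    (h : β l < 0) : x = 0 := by
  funext u
  refine hx u ?_
  rintro rfl
  exact absurd (wt_nonneg u l) (by omega)

/-- The unit of the shuffle algebra. -/
def one (R : Type*) [CommRing R] (n : ℕ) : Sh R n := fun u => if u = [] then 1 else 0

theorem one_mem_wtSh : one R n ∈ wtSh R 0 := by
  intro u hu
  rw [one, if_neg]
  rintro rfl
  exact hu rfl

@[simp] theorem raise_one (i : Fin n) : raise i (one R n) = 0 := by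
  funext u; simp [one]

end Basic

namespace QDatum

variable {R : Type*} [CommRing R] {n : ℕ} (D : QDatum R n)

theorem mul_flip' (i j : Fin n) : D.Q i j * D.Q j i = D.v ^ (D.d j * D.A j i) := by
  by_cases h : i = j
  · subst h
    rw [D.self, ← zpow_add, D.diag]
    congr 1; ring
  · rw [D.mul_flip i j h, D.symm]

/-- The group-like operator attached to the `j`-th simple root, as a scalar. -/
def chi (j : Fin n) (β : Fin n → ℤ) : Rˣ := D.v ^ (D.d j * coroot D.A j β)

theorem chi_add (j : Fin n) (β γ : Fin n → ℤ) : D.chi j (β + γ) = D.chi j β * D.chi j γ := by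
  rw [chi, coroot_add, mul_add, zpow_add]; rfl

theorem chi_ee (j i : Fin n) : D.chi j (ee i) = D.Q i j * D.Q j i := by
  rw [chi, coroot_ee, mul_flip']

@[simp] theorem chi_zero (j : Fin n) : D.chi j 0 = 1 := by simp [chi, coroot]

/-- The group-like operator attached to the `j`-th simple root. -/
def xi (j : Fin n) : Module.End R (Sh R n) :=
  { toFun := fun x u => (D.chi j (wt u) : R) * x u
    map_add' := fun x y => by funext u; simp [mul_add]
    map_smul' := fun c x => by funext u; simp [mul_left_comm] }

theorem xi_apply (j : Fin n) (x : Sh R n) (u : List (Fin n)) :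
    D.xi j x u = (D.chi j (wt u) : R) * x u := rfl

theorem xi_of_mem {j : Fin n} {β : Fin n → ℤ} {x : Sh R n} (hx : x ∈ wtSh R β) :
    D.xi j x = (D.chi j β : R) • x := by
  funext u
  rw [xi_apply, Pi.smul_apply, smul_eq_mul]
  by_cases h : wt u = β
  · rw [h]
  · rw [hx u h, mul_zero, mul_zero]

/-- The underlying function of `QDatum.lower`. -/
def lowerFun (c : R) (j : Fin n) (x : Sh R n) : List (Fin n) → R
  | [] => 0
  | i :: u => (if i = j then (1 - c * (D.chi j (wt u) : R)) * x u else 0) +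
      (D.Q j i : R) * lowerFun c j (raise i x) u

/-- The operator adjoining a letter `j`; for `c = 0` this is multiplication by the `j`-th generator
of the quantum shuffle algebra, in general it is the action of a lowering operator on a dual
Verma module. -/
def lower (c : R) (j : Fin n) : Module.End R (Sh R n) :=
  { toFun := D.lowerFun c j
    map_add' := fun x y => by
      funext u
      induction u generalizing x y with
      | nil => simp [lowerFun]
      | cons i u ih =>
        simp only [lowerFun, Pi.add_apply, map_add, ih]
        split_ifs <;> ring
    map_smul' := fun a x => by
      funext u
      induction u generalizing x with
      | nil => simp [lowerFun]
      | cons i u ih =>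
        simp only [lowerFun, Pi.smul_apply, map_smul, ih, RingHom.id_apply, smul_eq_mul]
        split_ifs <;> ring }

@[simp] theorem lower_nil (c : R) (j : Fin n) (x : Sh R n) : D.lower c j x [] = 0 := rfl

theorem raise_lower_self (c : R) (j : Fin n) : raise j * D.lower c j =
    (D.Q j j : R) • (D.lower c j * raise j) + 1 - c • D.xi j := by
  ext x u
  have : raise j (D.lower c j x) u = (if j = j then (1 - c * (D.chi j (wt u) : R)) * x u else 0) +
      (D.Q j j : R) * D.lower c j (raise j x) u := rfl
  simp only [Module.End.mul_apply, this, if_true, LinearMap.sub_apply, LinearMap.add_apply,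
    LinearMap.smul_apply, Module.End.one_apply, Pi.add_apply, Pi.sub_apply, Pi.smul_apply,
    smul_eq_mul, xi_apply]
  ring

theorem raise_lower_of_ne (c : R) {i j : Fin n} (h : i ≠ j) : raise i * D.lower c j =
    (D.Q j i : R) • (D.lower c j * raise i) := by
  ext x u
  have : raise i (D.lower c j x) u = (if i = j then (1 - c * (D.chi j (wt u) : R)) * x u else 0) +
      (D.Q j i : R) * D.lower c j (raise i x) u := rfl
  simp [Module.End.mul_apply, this, h]

theorem lower_mem_wtSh (c : R) (j : Fin n) {β : Fin n → ℤ} {x : Sh R n} (hx : x ∈ wtSh R β) :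
    D.lower c j x ∈ wtSh R (β + ee j) := by
  intro u
  induction u generalizing x β with
  | nil => intro _; rfl
  | cons i u ih =>
    intro hu
    rw [wt_cons] at hu
    have h1 := ih (raise_mem_wtSh (i := i) hx) (fun h => hu (by rw [h]; abel))
    change (if i = j then (1 - c * (D.chi j (wt u) : R)) * x u else 0) +
      (D.Q j i : R) * D.lower c j (raise i x) u = 0
    rw [h1, mul_zero, add_zero]
    split_ifs with h
    · subst h
      rw [hx u (fun h => hu (by rw [h]; abel)), mul_zero]
    · rfl

theorem xi_raise (i j : Fin n) : D.xi j * raise i =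
    ((D.chi j (ee i))⁻¹ : Rˣ).val • (raise i * D.xi j) := by
  ext x u
  simp only [Module.End.mul_apply, xi_apply, raise_apply, LinearMap.smul_apply, Pi.smul_apply,
    wt_cons, chi_add, smul_eq_mul, Units.val_mul]
  rw [← mul_assoc, ← mul_assoc, Units.inv_mul, one_mul]

theorem xi_lower (c : R) (i j : Fin n) : D.xi j * D.lower c i =
    (D.chi j (ee i) : R) • (D.lower c i * D.xi j) := by
  ext x u
  induction u generalizing x with
  | nil => simp [xi_apply]
  | cons l u ih =>
    have e : ∀ y : Sh R n, D.lower c i y (l :: u) =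
      (if l = i then (1 - c * (D.chi i (wt u) : R)) * y u else 0) +
        (D.Q i l : R) * D.lower c i (raise l y) u := fun _ => rfl
    have h1 := ih (raise l x)
    have h2 : raise l (D.xi j x) = (D.chi j (ee l) : R) • D.xi j (raise l x) := by
      funext u
      simp [xi_apply, chi_add, mul_assoc]
    simp only [Module.End.mul_apply, LinearMap.smul_apply, Pi.smul_apply, smul_eq_mul,
      xi_apply, e, h2, map_smul, wt_cons, chi_add, Units.val_mul] at h1 ⊢
    split_ifs with h
    · subst h
      linear_combination (D.chi j (ee l) : R) * (D.Q l l : R) * h1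
    · linear_combination (D.chi j (ee l) : R) * (D.Q i l : R) * h1

/-- The quantum Serre relations. -/
theorem serreElt_lower_eq_zero (lam : Fin n → R) {i j : Fin n} (hij : i ≠ j) :
    serreElt (D.Q i i : R) (D.Q i j) (D.lower (lam i) i) (D.lower (lam j) j)
      (1 - D.A i j).toNat = 0 := by
  obtain ⟨N, hN⟩ : ∃ N : ℕ, D.A i j = -N :=
    ⟨(-D.A i j).toNat, by have := D.off i j hij; omega⟩
  rw [show (1 - D.A i j).toNat = N + 1 by omega]
  have hfac : (1 - (D.Q i i : R) ^ N * ((D.Q i j : R) * D.Q j i)) = 0 := by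
    rw [sub_eq_zero]
    norm_cast
    rw [D.mul_flip i j hij, D.self, hN, ← zpow_natCast, ← zpow_mul, ← zpow_add]
    simp
  set S := serreElt (D.Q i i : R) (D.Q i j) (D.lower (lam i) i) (D.lower (lam j) j) with hS
  have hnil : ∀ m x, S m x [] = 0 := by
    intro m x
    induction m generalizing x with
    | zero => rfl
    | succ m ih =>
      change (D.lower (lam i) i * S m - _ • (S m * D.lower (lam i) i)) x [] = 0
      simp [ih]
  have hE : ∀ a, ∃ c : R, raise a * S (N + 1) = c • (S (N + 1) * raise a) := by
    intro a
    by_cases hai : a = i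
    · subst hai
      refine ⟨(D.Q a a : R) ^ (N + 1) * D.Q j a, ?_⟩
      have := serreElt_raise_self (D.Q a a : R) (D.Q a j) (D.lower (lam a) a) (D.lower (lam j) j)
        (D.raise_lower_self (lam a) a) (D.raise_lower_of_ne (lam j) hij)
        (by rw [smul_mul_assoc, xi_lower, mul_smul_comm, chi_ee, Units.val_mul, ← pow_two,
          smul_comm])
        (by rw [smul_mul_assoc, xi_lower, mul_smul_comm, chi_ee, Units.val_mul, smul_comm,
          mul_comm (D.Q j a : R)]) N
      rw [hfac, mul_zero, zero_smul, add_zero] at this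
      exact this
    · by_cases haj : a = j
      · subst haj
        refine ⟨(D.Q i a : R) ^ (N + 1) * D.Q a a, ?_⟩
        have := serreElt_raise_other (D.Q i i : R) (D.Q i a) (D.lower (lam i) i)
          (D.lower (lam a) a) (D.raise_lower_of_ne (lam i) hai) (D.raise_lower_self (lam a) a)
          (T := lam a • D.xi a) (c' := (D.Q i a : R) * D.Q a i)
          (by rw [smul_mul_assoc, xi_lower, mul_smul_comm, chi_ee, Units.val_mul, smul_comm])
          (N + 1)
        rw [Finset.prod_range_succ' (fun s => 1 - (D.Q i i : R) ^ s), Finset.prod_range_succ,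
          hfac] at this
        simpa using this
      · exact ⟨_, serreElt_comm _ _ _ _ (D.raise_lower_of_ne (lam i) hai)
          (D.raise_lower_of_ne (lam j) haj) _⟩
  ext x u
  induction u generalizing x with
  | nil => exact hnil _ _
  | cons a u ih =>
    obtain ⟨c, hc⟩ := hE a
    have h1 := congrFun (LinearMap.congr_fun hc x) u
    have h2 := ih (raise a x)
    simp only [Module.End.mul_apply, LinearMap.smul_apply, raise_apply, Pi.smul_apply] at h1
    rw [h1, h2]
    simp

end QDatum

theorem exists_pow_serreElt_apply_eq_zero {R V : Type*} [CommRing R] [AddCommGroup V] [Module R V]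
    (p c : R) (X Y : Module.End R V) {M : ℕ} (hM : serreElt p c X Y M = 0) {N : ℕ} {x : V}
    (hx : (X ^ N) x = 0) : ∃ N', (X ^ N') (Y x) = 0 := by
  have mono : ∀ {a b : ℕ} {y : V}, a ≤ b → (X ^ a) y = 0 → (X ^ b) y = 0 := by
    intro a b y hab h
    obtain ⟨l, rfl⟩ := Nat.exists_eq_add_of_le hab
    rw [add_comm, pow_add, Module.End.mul_apply, h, map_zero]
  have key : ∀ t m, m + t = M → ∀ N x, (X ^ N) x = 0 →
      ∃ N', (X ^ N') (serreElt p c X Y m x) = 0 := by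
    intro t
    induction t with
    | zero =>
      rintro m rfl N x -
      rw [add_zero] at hM
      exact ⟨0, by simp [hM]⟩
    | succ t iht =>
      intro m hm N
      induction N with
      | zero =>
        intro x hx
        exact ⟨0, by rw [show x = 0 by simpa using hx]; simp⟩
      | succ N ihN =>
        intro x hx
        obtain ⟨N₁, h₁⟩ := iht (m + 1) (by omega) (N + 1) x hx
        obtain ⟨N₂, h₂⟩ := ihN (X x) (by rw [pow_succ] at hx; exact hx)
        have e : X (serreElt p c X Y m x) =
            serreElt p c X Y (m + 1) x + (p ^ m * c) • serreElt p c X Y m (X x) := by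
          simp [serreElt]
        refine ⟨max N₁ N₂ + 1, ?_⟩
        rw [pow_succ, Module.End.mul_apply, e, map_add, map_smul,
          mono (le_max_left _ _) h₁, mono (le_max_right _ _) h₂]
        simp
  exact key M 0 (zero_add M) N x hx

theorem wtSh_congr {R : Type*} [CommRing R] {n : ℕ} {β γ : Fin n → ℤ} (h : β = γ) {x : Sh R n}
    (hx : x ∈ wtSh R β) : x ∈ wtSh R γ := h ▸ hx

theorem raise_pow_mem_wtSh {R : Type*} [CommRing R] {n : ℕ} {i : Fin n} {β : Fin n → ℤ}
    {x : Sh R n} (hx : x ∈ wtSh R β) (m : ℕ) :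
    (raise i ^ m) x ∈ wtSh R (β - (m : ℤ) • ee i) := by
  induction m with
  | zero => simpa using hx
  | succ m ih =>
    rw [pow_succ', Module.End.mul_apply]
    exact wtSh_congr (by push_cast; module) (raise_mem_wtSh ih)

theorem exists_raise_pow_eq_zero {R : Type*} [CommRing R] {n : ℕ} (i : Fin n) {β : Fin n → ℤ}
    {x : Sh R n} (hx : x ∈ wtSh R β) : ∃ N, (raise i ^ N) x = 0 := by
  refine ⟨(β i).toNat + 1, eq_zero_of_mem_wtSh (l := i) (raise_pow_mem_wtSh hx _) ?_⟩
  simp [ee_apply]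

theorem smul_sh_eq_zero {R : Type*} [CommRing R] [IsDomain R] {n : ℕ} (a : R) (x : Sh R n)
    (ha : a ≠ 0) (h : a • x = 0) : x = 0 := by
  funext u
  exact (mul_eq_zero.mp (congrFun h u)).resolve_left ha

namespace QDatum

variable {R : Type*} [CommRing R] {n : ℕ} (D : QDatum R n)

/-- The lowering operators of the dual Verma module of highest weight zero, in which
the highest weight vector generates the integrable module shifted by the Weyl vector. -/
def low (j : Fin n) : Module.End R (Sh R n) := D.lower ((D.v ^ (-D.d j) : Rˣ) : R) j

/-- The weight of `j`-th coroot on the weight space of index `β`. -/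
def cw (j : Fin n) (β : Fin n → ℤ) : ℤ := 1 - coroot D.A j β

theorem cw_add_smul (j : Fin n) (β : Fin n → ℤ) (t : ℤ) :
    D.cw j (β + t • ee j) = D.cw j β - 2 * t := by
  simp only [cw, coroot_add, coroot_smul, coroot_ee, D.diag]; ring

/-- The scalars in the commutation relations of powers of `raise` and `low`. -/
def num (j : Fin n) (s : ℕ) (t : ℤ) : R :=
  qInt (D.Q j j : R) (s + 1) * (1 - ((D.v ^ (D.d j * t) : Rˣ) : R))

theorem num_zero (j : Fin n) (s : ℕ) : D.num j s 0 = 0 := by simp [num]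

theorem one_sub_zpow_ne_zero {z : ℤ} (hz : z ≠ 0) : 1 - ((D.v ^ z : Rˣ) : R) ≠ 0 := by
  rw [sub_ne_zero]
  intro h
  exact D.free z hz (Units.ext (by rw [← h, Units.val_one]))

theorem num_ne_zero [IsDomain R] (j : Fin n) (s : ℕ) {t : ℤ} (ht : t ≠ 0) : D.num j s t ≠ 0 := by
  have hd := (D.pos j).ne'
  refine mul_ne_zero (fun h => ?_) (D.one_sub_zpow_ne_zero (mul_ne_zero hd ht))
  have h1 := mul_geom_sum (D.Q j j : R) (s + 1)
  rw [← qInt, h, mul_zero, D.self] at h1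
  refine D.one_sub_zpow_ne_zero (z := D.d j * (s + 1 : ℕ)) (mul_ne_zero hd (by positivity)) ?_
  rw [zpow_mul, zpow_natCast, Units.val_pow_eq_pow_val]
  linear_combination h1

theorem smul_xi_of_mem {j : Fin n} {β : Fin n → ℤ} {x : Sh R n} (hx : x ∈ wtSh R β) :
    ((D.v ^ (-D.d j) : Rˣ) : R) • D.xi j x = ((D.v ^ (-(D.d j * D.cw j β)) : Rˣ) : R) • x := by
  rw [D.xi_of_mem hx, smul_smul, chi, ← Units.val_mul, ← zpow_add, cw]
  congr 3; ring

theorem raise_low_pow (j : Fin n) {β : Fin n → ℤ} {x : Sh R n} (hx : x ∈ wtSh R β) (s : ℕ) :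
    raise j ((D.low j ^ (s + 1)) x) = (D.Q j j : R) ^ (s + 1) • (D.low j ^ (s + 1)) (raise j x) +
      D.num j s (s - D.cw j β) • (D.low j ^ s) x := by
  have h := LinearMap.congr_fun (raise_pow (D.Q j j : R) (D.low j)
    (D.raise_lower_self ((D.v ^ (-D.d j) : Rˣ) : R) j)
    (by rw [smul_mul_assoc, low, xi_lower, mul_smul_comm, chi_ee, Units.val_mul, ← pow_two,
          smul_comm]) s) x
  simp only [Module.End.mul_apply, LinearMap.sub_apply, LinearMap.add_apply,
    LinearMap.smul_apply] at h
  rw [h, D.smul_xi_of_mem hx, map_smul, num]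
  have : (((D.v ^ (D.d j * (s - D.cw j β)) : Rˣ)) : R) =
      (D.Q j j : R) ^ s * ((D.v ^ (-(D.d j * D.cw j β)) : Rˣ) : R) := by
    rw [D.self, ← Units.val_pow_eq_pow_val, ← Units.val_mul, ← zpow_natCast, ← zpow_mul, ← zpow_add]
    congr 2; ring
  rw [this]
  module

theorem raise_pow_low (j : Fin n) {β : Fin n → ℤ} {x : Sh R n} (hx : x ∈ wtSh R β) (s : ℕ) :
    (raise j ^ (s + 1)) (D.low j x) = (D.Q j j : R) ^ (s + 1) • D.low j ((raise j ^ (s + 1)) x) +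
      D.num j s (-s - D.cw j β) • (raise j ^ s) x := by
  have h := LinearMap.congr_fun (pow_raise (D.Q j j : R) (D.low j)
    (p' := ((D.Q j j)⁻¹ : Rˣ)) (Units.inv_mul _)
    (D.raise_lower_self ((D.v ^ (-D.d j) : Rˣ) : R) j)
    (by rw [smul_mul_assoc, xi_raise, mul_smul_comm, chi_ee, ← pow_two, ← inv_pow,
      Units.val_pow_eq_pow_val,
          smul_comm]) s) x
  simp only [Module.End.mul_apply, LinearMap.sub_apply, LinearMap.add_apply,
    LinearMap.smul_apply] at h
  rw [h, D.smul_xi_of_mem hx, map_smul, num]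
  have : (((D.v ^ (D.d j * (-s - D.cw j β)) : Rˣ)) : R) =
      (((D.Q j j)⁻¹ : Rˣ) : R) ^ s * ((D.v ^ (-(D.d j * D.cw j β)) : Rˣ) : R) := by
    rw [D.self, ← Units.val_pow_eq_pow_val, ← Units.val_mul, ← zpow_natCast, ← zpow_neg,
      ← zpow_mul, ← zpow_add]
    congr 2; ring
  rw [this]
  module

theorem low_mem_wtSh (j : Fin n) {β : Fin n → ℤ} {x : Sh R n} (hx : x ∈ wtSh R β) :
    D.low j x ∈ wtSh R (β + ee j) := D.lower_mem_wtSh _ j hx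

theorem low_pow_mem_wtSh (j : Fin n) {β : Fin n → ℤ} {x : Sh R n} (hx : x ∈ wtSh R β) (m : ℕ) :
    (D.low j ^ m) x ∈ wtSh R (β + (m : ℤ) • ee j) := by
  induction m with
  | zero => simpa using hx
  | succ m ih =>
    rw [pow_succ', Module.End.mul_apply]
    exact wtSh_congr (by push_cast; module) (D.low_mem_wtSh j ih)

theorem raise_low_of_ne {i j : Fin n} (h : i ≠ j) (x : Sh R n) :
    raise i (D.low j x) = (D.Q j i : R) • D.low j (raise i x) :=
  LinearMap.congr_fun (D.raise_lower_of_ne _ h) x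

theorem raise_low_of_mem (j : Fin n) {β : Fin n → ℤ} {x : Sh R n} (hx : x ∈ wtSh R β) :
    raise j (D.low j x) = (D.Q j j : R) • D.low j (raise j x) + D.num j 0 (-D.cw j β) • x := by
  simpa using D.raise_low_pow j hx 0

/-- The monomials in the lowering operators applied to the highest weight vector. -/
def mono (u : List (Fin n)) : Sh R n := u.foldr (fun j x => D.low j x) (one R n)

@[simp] theorem mono_nil : D.mono [] = one R n := rfl
@[simp] theorem mono_cons (j : Fin n) (u : List (Fin n)) :
    D.mono (j :: u) = D.low j (D.mono u) := rfl

theorem mono_mem_wtSh (u : List (Fin n)) : D.mono u ∈ wtSh R (wt u) := by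
  induction u with
  | nil => exact one_mem_wtSh
  | cons j u ih => exact wtSh_congr (by rw [wt_cons, add_comm]) (D.low_mem_wtSh j ih)

/-- The submodule generated by the highest weight vector. -/
def hw : Submodule R (Sh R n) := Submodule.span R (Set.range D.mono)

theorem one_mem_hw : one R n ∈ D.hw := Submodule.subset_span ⟨[], rfl⟩

theorem low_mem_hw (j : Fin n) {x : Sh R n} (hx : x ∈ D.hw) : D.low j x ∈ D.hw := by
  refine (Submodule.span_le (p := D.hw.comap (D.low j))).mpr ?_ hx
  rintro _ ⟨u, rfl⟩
  exact Submodule.subset_span ⟨j :: u, rfl⟩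

theorem low_pow_mem_hw (j : Fin n) {x : Sh R n} (hx : x ∈ D.hw) (m : ℕ) :
    (D.low j ^ m) x ∈ D.hw := by
  induction m with
  | zero => simpa using hx
  | succ m ih => rw [pow_succ']; exact D.low_mem_hw j ih

theorem raise_mem_hw (i : Fin n) {x : Sh R n} (hx : x ∈ D.hw) : raise i x ∈ D.hw := by
  refine (Submodule.span_le (p := D.hw.comap (raise i))).mpr ?_ hx
  rintro _ ⟨u, rfl⟩
  change raise i (D.mono u) ∈ D.hw
  induction u with
  | nil => simp
  | cons j u ih =>
    rw [mono_cons]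
    by_cases h : i = j
    · subst h
      rw [D.raise_low_of_mem i (D.mono_mem_wtSh u)]
      exact add_mem (D.hw.smul_mem _ (D.low_mem_hw _ ih))
        (D.hw.smul_mem _ (Submodule.subset_span ⟨u, rfl⟩))
    · rw [D.raise_low_of_ne h]
      exact D.hw.smul_mem _ (D.low_mem_hw _ ih)

theorem raise_pow_mem_hw (i : Fin n) {x : Sh R n} (hx : x ∈ D.hw) (m : ℕ) :
    (raise i ^ m) x ∈ D.hw := by
  induction m with
  | zero => simpa using hx
  | succ m ih => rw [pow_succ']; exact D.raise_mem_hw i ih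

theorem low_low_one (j : Fin n) : D.low j (D.low j (one R n)) = 0 := by
  refine sh_ext rfl fun a => ?_
  rw [map_zero]
  by_cases h : a = j
  · subst h
    have := D.raise_low_pow a (one_mem_wtSh (R := R)) 1
    simpa [cw, coroot, num_zero, pow_two] using this
  · rw [D.raise_low_of_ne h, D.raise_low_of_ne h, raise_one]; simp

theorem exists_low_pow_eq_zero (j : Fin n) {x : Sh R n} (hx : x ∈ D.hw) :
    ∃ N, (D.low j ^ N) x = 0 := by
  refine Submodule.span_induction (p := fun x _ => ∃ N, (D.low j ^ N) x = 0)
    ?_ ⟨0, by simp⟩ ?_ ?_ hx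
  · rintro _ ⟨u, rfl⟩
    induction u with
    | nil => exact ⟨2, by simpa [pow_two] using D.low_low_one j⟩
    | cons i u ih =>
      obtain ⟨N, hN⟩ := ih
      rw [mono_cons]
      by_cases h : j = i
      · subst h
        exact ⟨N, by rw [← Module.End.mul_apply, ← pow_succ, pow_succ', Module.End.mul_apply, hN,
          map_zero]⟩
      · exact exists_pow_serreElt_apply_eq_zero _ _ _ _
          (D.serreElt_lower_eq_zero (fun j => ((D.v ^ (-D.d j) : Rˣ) : R)) h) hN
  · rintro x y - - ⟨a, ha⟩ ⟨b, hb⟩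
    refine ⟨a + b, ?_⟩
    rw [map_add, add_comm a b, pow_add, Module.End.mul_apply, ha, ← pow_add, add_comm b a, pow_add,
      Module.End.mul_apply, hb]
    simp
  · rintro c x - ⟨N, hN⟩
    exact ⟨N, by rw [map_smul, hN, smul_zero]⟩

/-- The weight spaces of the highest weight module are invariant under the Weyl group. -/
theorem hw_eq_zero_of_refl [IsDomain R] (j : Fin n) {β : Fin n → ℤ}
    (h : ∀ x ∈ D.hw, x ∈ wtSh R (β + D.cw j β • ee j) → x = 0) :
    ∀ x ∈ D.hw, x ∈ wtSh R β → x = 0 := by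
  intro x hx hβ
  rcases le_total 0 (D.cw j β) with h0 | h0
  · obtain ⟨m, hm⟩ := Int.eq_ofNat_of_zero_le h0
    obtain ⟨N, hN⟩ := exists_raise_pow_eq_zero j hβ
    refine eq_zero_of_pow_eq_zero smul_sh_eq_zero (raise j) (D.low j)
      (fun t => wtSh R (β - t • ee j)) (fun t => D.cw j (β - t • ee j)) ?_ ?_ ?_ N m 0 x
      (by simpa using hβ) (by simpa using hm) hN
      (h _ (D.low_pow_mem_hw j hx m) (by rw [hm]; exact D.low_pow_mem_wtSh j hβ m))
    · intro t
      simp only [sub_eq_add_neg, ← neg_smul, cw_add_smul]; ring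
    · intro t x hx
      exact wtSh_congr (by module) (raise_mem_wtSh hx)
    · intro t x hx s
      exact ⟨_, _, by rw [← Units.val_pow_eq_pow_val]; exact Units.ne_zero _,
        fun hs => D.num_ne_zero j s (by omega), D.raise_low_pow j hx s⟩
  · obtain ⟨m, hm⟩ := Int.eq_ofNat_of_zero_le (neg_nonneg.mpr h0)
    obtain ⟨N, hN⟩ := D.exists_low_pow_eq_zero j hx
    refine eq_zero_of_pow_eq_zero smul_sh_eq_zero (D.low j) (raise j)
      (fun t => wtSh R (β + t • ee j)) (fun t => -D.cw j (β + t • ee j)) ?_ ?_ ?_ N m 0 x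
      (by simpa using hβ) (by simpa using hm) hN
      (h _ (D.raise_pow_mem_hw j hx m) (by
        rw [show D.cw j β = -(m : ℤ) by omega, neg_smul, ← sub_eq_add_neg]
        exact raise_pow_mem_wtSh hβ m))
    · intro t
      simp only [cw_add_smul]; ring
    · intro t x hx
      exact wtSh_congr (by module) (D.low_mem_wtSh j hx)
    · intro t x hx s
      have e := D.raise_pow_low j hx s
      set u : Rˣ := D.Q j j ^ (s + 1) with hu
      rw [← Units.val_pow_eq_pow_val, ← hu] at e
      refine ⟨(u⁻¹ : Rˣ), -((u⁻¹ : Rˣ) * D.num j s (-s - D.cw j (β + t • ee j))),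
        (u⁻¹).ne_zero, fun hs => neg_ne_zero.mpr
          (mul_ne_zero (u⁻¹).ne_zero (D.num_ne_zero j s (by omega))), ?_⟩
      rw [e, smul_add, smul_smul, smul_smul, Units.inv_mul, one_smul, neg_smul]
      abel

end QDatum

/-- Words all of whose infixes `i :: y` give a positive vector `actL A y (ee i)`. -/
def PosWord {n : ℕ} (A : Matrix (Fin n) (Fin n) ℤ) (w : List (Fin n)) : Prop :=
  GoodWord A {β | (∀ l, 0 ≤ β l) ∧ β ≠ 0} w

theorem PosWord.of_append {n : ℕ} {A : Matrix (Fin n) (Fin n) ℤ} {a w b : List (Fin n)}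
    (h : PosWord A (a ++ w ++ b)) : PosWord A w := by
  rintro x i y t rfl
  exact h (a ++ x) i y (t ++ b) (by simp)

theorem PosWord.tail {n : ℕ} {A : Matrix (Fin n) (Fin n) ℤ} {i : Fin n} {w : List (Fin n)}
    (h : PosWord A (i :: w)) : PosWord A w :=
  PosWord.of_append (a := [i]) (b := []) (by simpa using h)

/-- `Str w m x` says that the exponents of the string of `x` along `w` are given by `m`, and that
the string ends in a nonzero multiple of the unit. -/
def Str {R : Type*} [CommRing R] {n : ℕ} : List (Fin n) → (ℕ → ℕ) → Sh R n → Prop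
  | [], _, x => ∃ c : R, c ≠ 0 ∧ x = c • one R n
  | i :: w, m, x => (raise i ^ (m 0 + 1)) x = 0 ∧ Str w (fun r => m (r + 1)) ((raise i ^ m 0) x)

section

variable {R : Type*} [CommRing R] {n : ℕ}

theorem Str.smul [IsDomain R] {w : List (Fin n)} {m : ℕ → ℕ} {x : Sh R n} (h : Str w m x) {c : R}
    (hc : c ≠ 0) : Str w m (c • x) := by
  induction w generalizing m x with
  | nil =>
    obtain ⟨b, hb, rfl⟩ := h
    exact ⟨c * b, mul_ne_zero hc hb, smul_smul _ _ _⟩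
  | cons i w ih =>
    refine ⟨by rw [map_smul, h.1, smul_zero], ?_⟩
    rw [map_smul]
    exact ih h.2

theorem Str.append {w t : List (Fin n)} {m : ℕ → ℕ} {x : Sh R n} (h : Str w m x)
    (hm : ∀ r, w.length ≤ r → m r = 0) : Str (w ++ t) m x := by
  induction w generalizing m x with
  | nil =>
    obtain ⟨b, hb, rfl⟩ := h
    replace hm : m = 0 := funext fun r => hm r (Nat.zero_le r)
    subst hm
    rw [List.nil_append]
    induction t with
    | nil => exact ⟨b, hb, rfl⟩
    | cons i t ih => exact ⟨by simp, ih⟩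
  | cons i w ih =>
    exact ⟨h.1, ih h.2 fun r hr => hm (r + 1) (by simpa using hr)⟩

end

namespace QDatum

variable {R : Type*} [CommRing R] {n : ℕ} (D : QDatum R n)

/-- The weights of the extremal vectors. -/
def extWt : List (Fin n) → Fin n → ℤ
  | [] => 0
  | i :: w => extWt w + D.cw i (extWt w) • ee i

/-- The exponents of the extremal vectors. -/
def extExp : List (Fin n) → ℕ → ℕ
  | [], _ => 0
  | i :: w, 0 => (D.cw i (D.extWt w)).toNat
  | _ :: w, r + 1 => extExp w r

/-- The extremal vectors. -/
def extVec : List (Fin n) → Sh R n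
  | [] => one R n
  | i :: w => (D.low i ^ (D.cw i (D.extWt w)).toNat) (extVec w)

theorem extVec_mem_hw (w : List (Fin n)) : D.extVec w ∈ D.hw := by
  induction w with
  | nil => exact D.one_mem_hw
  | cons i w ih => exact D.low_pow_mem_hw i ih _

theorem extExp_of_length_le (w : List (Fin n)) {r : ℕ} (h : w.length ≤ r) : D.extExp w r = 0 := by
  induction w generalizing r with
  | nil => rfl
  | cons i w ih =>
    cases r with
    | zero => simp at h
    | succ r => exact ih (by simpa using h)

theorem extExp_append_singleton (w : List (Fin n)) (i : Fin n) :
    D.extExp (w ++ [i]) w.length = 1 := by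
  induction w with
  | nil => simp [extExp, extWt, cw, coroot]
  | cons j w ih => exact ih

theorem sum_mul_cw_extWt (w : List (Fin n)) (η : Fin n → ℤ) :
    ∑ l, D.d l * η l * D.cw l (D.extWt w) = ∑ l, D.d l * actL D.A w η l := by
  induction w generalizing η with
  | nil => simp [extWt, cw, coroot]
  | cons i w ih =>
    rw [actL_cons, ← ih]
    set c := D.cw i (D.extWt w)
    have h1 : ∀ l, D.cw l (D.extWt (i :: w)) = D.cw l (D.extWt w) - c * D.A l i := by
      intro l
      change 1 - coroot D.A l (D.extWt w + c • ee i) = 1 - coroot D.A l (D.extWt w) - _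
      rw [coroot_add, coroot_smul, coroot_ee]
      ring
    have h2 : ∀ l, D.d l * refl D.A i η l * D.cw l (D.extWt w) =
        D.d l * η l * D.cw l (D.extWt w) -
          if l = i then D.d i * coroot D.A i η * c else 0 := by
      intro l
      simp only [refl, Pi.sub_apply, Pi.smul_apply, ee_apply, smul_eq_mul]
      split_ifs with h
      · subst h; ring
      · ring
    simp only [h1, h2, mul_sub, Finset.sum_sub_distrib, Finset.sum_ite_eq',
      Finset.mem_univ, if_true]
    congr 1
    rw [coroot, Finset.mul_sum, Finset.sum_mul]
    refine Finset.sum_congr rfl fun l _ => ?_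
    linear_combination (η l * c) * D.symm l i

theorem cw_extWt_pos {i : Fin n} {w : List (Fin n)} (h : PosWord D.A (i :: w)) :
    0 < D.cw i (D.extWt w) := by
  obtain ⟨h0, h1⟩ := h [] i w [] (by simp)
  have e := D.sum_mul_cw_extWt w (ee i)
  simp only [ee_apply, mul_ite, mul_one, mul_zero, ite_mul, zero_mul, Finset.sum_ite_eq',
    Finset.mem_univ, if_true] at e
  have hpos : 0 < ∑ l, D.d l * actL D.A w (ee i) l := by
    obtain ⟨l, hl⟩ := Function.ne_iff.mp h1
    exact Finset.sum_pos' (fun l _ => mul_nonneg (D.pos l).le (h0 l))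
      ⟨l, Finset.mem_univ l, mul_pos (D.pos l) (lt_of_le_of_ne (h0 l) (Ne.symm hl))⟩
  rw [← e] at hpos
  exact pos_of_mul_pos_right hpos (D.pos i).le

theorem extVec_mem_wtSh {w : List (Fin n)} (h : PosWord D.A w) :
    D.extVec w ∈ wtSh R (D.extWt w) := by
  induction w with
  | nil => exact one_mem_wtSh
  | cons i w ih =>
    have := D.low_pow_mem_wtSh i (ih h.tail) (D.cw i (D.extWt w)).toNat
    rwa [Int.toNat_of_nonneg (D.cw_extWt_pos h).le] at this

theorem hw_eq_zero_of_actL [IsDomain R] (w : List (Fin n)) (η : Fin n → ℤ) {l : Fin n}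
    (hl : 0 < actL D.A w η l) : ∀ x ∈ D.hw, x ∈ wtSh R (D.extWt w - η) → x = 0 := by
  induction w generalizing η with
  | nil =>
    intro x _ hx
    exact eq_zero_of_mem_wtSh hx (l := l) (by simpa [extWt] using hl)
  | cons i w ih =>
    refine D.hw_eq_zero_of_refl i ?_
    rw [actL_cons] at hl
    have e : D.extWt (i :: w) - η + D.cw i (D.extWt (i :: w) - η) • ee i =
        D.extWt w - refl D.A i η := by
      have : D.cw i (D.extWt (i :: w) - η) = -D.cw i (D.extWt w) + coroot D.A i η := by
        rw [extWt, sub_eq_add_neg, ← neg_one_smul ℤ η]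
        simp only [cw, coroot_add, coroot_smul, coroot_ee, D.diag]
        ring
      rw [this, extWt, refl]
      module
    rw [e]
    exact ih _ hl

theorem raise_extVec [IsDomain R] {i : Fin n} {w : List (Fin n)} (h : PosWord D.A (i :: w)) :
    raise i (D.extVec w) = 0 := by
  obtain ⟨h0, h1⟩ := h [] i w [] (by simp)
  obtain ⟨l, hl⟩ := Function.ne_iff.mp h1
  exact D.hw_eq_zero_of_actL w (ee i) (lt_of_le_of_ne (h0 l) (Ne.symm hl)) _
    (D.raise_mem_hw i (D.extVec_mem_hw w)) (raise_mem_wtSh (D.extVec_mem_wtSh h.tail))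

/-- The strings of the extremal vectors. -/
theorem str_extVec [IsDomain R] {w : List (Fin n)} (h : PosWord D.A w) :
    Str w (D.extExp w) (D.extVec w) := by
  induction w with
  | nil => exact ⟨1, one_ne_zero, (one_smul _ _).symm⟩
  | cons i w ih =>
    set a := (D.cw i (D.extWt w)).toNat with ha
    have ha' : (a : ℤ) = D.cw i (D.extWt w) := Int.toNat_of_nonneg (D.cw_extWt_pos h).le
    set z := D.extVec w with hz
    have hE : raise i z = 0 := D.raise_extVec h
    have key : ∀ s ≤ a, ∃ c : R, c ≠ 0 ∧ (raise i ^ s) ((D.low i ^ s) z) = c • z := by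
      intro s
      induction s with
      | zero => exact fun _ => ⟨1, one_ne_zero, by simp⟩
      | succ s ihs =>
        intro hs
        obtain ⟨c, hc, e⟩ := ihs (by omega)
        refine ⟨D.num i s (s - D.cw i (D.extWt w)) * c,
          mul_ne_zero (D.num_ne_zero i s (by omega)) hc, ?_⟩
        rw [pow_succ, Module.End.mul_apply, D.raise_low_pow i (D.extVec_mem_wtSh h.tail), ← hz, hE,
          map_zero, smul_zero, zero_add, map_smul, e, smul_smul]
    obtain ⟨c, hc, e⟩ := key a le_rfl
    constructor
    · change (raise i ^ (a + 1)) ((D.low i ^ a) z) = 0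
      rw [pow_succ', Module.End.mul_apply, e, map_smul, hE, smul_zero]
    · change Str w (D.extExp w) ((raise i ^ a) ((D.low i ^ a) z))
      rw [e]
      exact (ih h.tail).smul hc

end QDatum

section

variable {R : Type*} [CommRing R] {n : ℕ}

/-- The diagonal operator attached to a character of the weight lattice. -/
def diagOp (f : Fin n → Rˣ) : Module.End R (Sh R n) :=
  { toFun := fun x u => ((u.map f).prod : Rˣ) * x u
    map_add' := fun x y => by funext u; simp [mul_add]
    map_smul' := fun c x => by funext u; simp [mul_left_comm] }

theorem diagOp_apply (f : Fin n → Rˣ) (x : Sh R n) (u : List (Fin n)) :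
    diagOp f x u = ((u.map f).prod : Rˣ) * x u := rfl

@[simp] theorem diagOp_one (f : Fin n → Rˣ) : diagOp f (one R n) = one R n := by
  funext u
  cases u <;> simp [diagOp_apply, one]

theorem raise_diagOp (f : Fin n → Rˣ) (i : Fin n) (x : Sh R n) :
    raise i (diagOp f x) = (f i : R) • diagOp f (raise i x) := by
  funext u
  simp [diagOp_apply, mul_assoc]

theorem prod_map_eq (f : Fin n → Rˣ) (u : List (Fin n)) :
    (u.map f).prod = ∏ l, f l ^ wt u l := by
  induction u with
  | nil => simp
  | cons i u ih =>
    simp only [List.map_cons, List.prod_cons, wt_cons, Pi.add_apply, zpow_add,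
      Finset.prod_mul_distrib, ih]
    congr 1
    rw [Finset.prod_eq_single i]
    · simp [ee_apply]
    · intro b _ hb; simp [ee_apply, hb]
    · simp

theorem diagOp_of_mem (f : Fin n → Rˣ) {β : Fin n → ℤ} {x : Sh R n} (hx : x ∈ wtSh R β) :
    diagOp f x = ((∏ l, f l ^ β l : Rˣ) : R) • x := by
  funext u
  rw [diagOp_apply, Pi.smul_apply, smul_eq_mul]
  by_cases h : wt u = β
  · rw [prod_map_eq, h]
  · rw [hx u h, mul_zero, mul_zero]

theorem diagOp_mem_wtSh (f : Fin n → Rˣ) {β : Fin n → ℤ} {x : Sh R n} (hx : x ∈ wtSh R β) :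
    diagOp f x ∈ wtSh R β := by
  rw [diagOp_of_mem f hx]; exact (wtSh R β).smul_mem _ hx

/-- Gaussian binomial coefficients. -/
def qBinom (p : R) : ℕ → ℕ → R
  | 0, _ => 1
  | _ + 1, 0 => 1
  | a + 1, b + 1 => p ^ (b + 1) * qBinom p a (b + 1) + qBinom p (a + 1) b

theorem qBinom_mul (p : R) (a b : ℕ) :
    qBinom p a b * ((∏ s ∈ Finset.range a, (1 - p ^ (s + 1))) *
      ∏ s ∈ Finset.range b, (1 - p ^ (s + 1))) = ∏ s ∈ Finset.range (a + b), (1 - p ^ (s + 1)) := by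
  induction a generalizing b with
  | zero => simp [qBinom]
  | succ a iha =>
    induction b with
    | zero => simp [qBinom]
    | succ b ihb =>
      have h1 := iha (b + 1)
      rw [show a + (b + 1) = a + b + 1 by ring] at h1
      rw [show a + 1 + b = a + b + 1 by ring] at ihb
      rw [show a + 1 + (b + 1) = a + b + 1 + 1 by ring, Finset.prod_range_succ _ (a + b + 1)]
      rw [Finset.prod_range_succ _ a] at ihb ⊢
      rw [Finset.prod_range_succ _ b] at h1 ⊢
      rw [qBinom]
      linear_combination p ^ (b + 1) * (1 - p ^ (a + 1)) * h1 + (1 - p ^ (b + 1)) * ihb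

theorem qBinom_ne_zero [IsDomain R] {p : R} (hp : ∀ s : ℕ, 1 - p ^ (s + 1) ≠ 0) (a b : ℕ) :
    qBinom p a b ≠ 0 := by
  intro h
  have := qBinom_mul p a b
  rw [h, zero_mul] at this
  exact Finset.prod_ne_zero_iff.mpr (fun s _ => hp s) this.symm

end

namespace QDatum

variable {R : Type*} [CommRing R] {n : ℕ} (D : QDatum R n)

/-- Right multiplication by the group-like element of a simple root. -/
def tau (i : Fin n) : Module.End R (Sh R n) := diagOp fun c => D.Q c i

theorem tau_mem_wtSh (i : Fin n) {β : Fin n → ℤ} {x : Sh R n} (hx : x ∈ wtSh R β) :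
    D.tau i x ∈ wtSh R β := diagOp_mem_wtSh _ hx

/-- The underlying function of the quantum shuffle product. -/
def starFun (x y : Sh R n) : List (Fin n) → R
  | [] => x [] * y []
  | i :: u => starFun (raise i x) y u + starFun (D.tau i x) (raise i y) u

/-- The quantum shuffle product. -/
def star : Sh R n →ₗ[R] Sh R n →ₗ[R] Sh R n :=
  LinearMap.mk₂ R D.starFun
    (fun x x' y => by
      funext u
      induction u generalizing x x' y with
      | nil => simp [starFun, add_mul]
      | cons i u ih => simp only [starFun, map_add, ih, Pi.add_apply]; ring)
    (fun c x y => by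
      funext u
      induction u generalizing x y with
      | nil => simp [starFun, mul_assoc]
      | cons i u ih => simp only [starFun, map_smul, ih, Pi.smul_apply, smul_add])
    (fun x y y' => by
      funext u
      induction u generalizing x y y' with
      | nil => simp [starFun, mul_add]
      | cons i u ih => simp only [starFun, map_add, ih, Pi.add_apply]; ring)
    (fun c x y => by
      funext u
      induction u generalizing x y with
      | nil => simp [starFun, mul_left_comm]
      | cons i u ih => simp only [starFun, map_smul, ih, Pi.smul_apply, smul_add])

@[simp] theorem star_nil (x y : Sh R n) : D.star x y [] = x [] * y [] := rfl

theorem raise_star (i : Fin n) (x y : Sh R n) :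
    raise i (D.star x y) = D.star (raise i x) y + D.star (D.tau i x) (raise i y) := rfl

@[simp] theorem one_star (y : Sh R n) : D.star (one R n) y = y := by
  funext u
  induction u generalizing y with
  | nil => simp [one]
  | cons i u ih =>
    have := congrFun (D.raise_star i (one R n) y) u
    rw [raise_one, map_zero, LinearMap.zero_apply, zero_add, tau, diagOp_one, ih] at this
    exact this

@[simp] theorem star_one (x : Sh R n) : D.star x (one R n) = x := by
  funext u
  induction u generalizing x with
  | nil => simp [one]
  | cons i u ih =>
    have := congrFun (D.raise_star i x (one R n)) u
    rw [raise_one, map_zero, add_zero, ih] at this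
    exact this

theorem star_mem_wtSh {β γ : Fin n → ℤ} {x y : Sh R n} (hx : x ∈ wtSh R β) (hy : y ∈ wtSh R γ) :
    D.star x y ∈ wtSh R (β + γ) := by
  intro u
  induction u generalizing x y β γ with
  | nil =>
    intro h
    rw [star_nil]
    by_cases hβ : wt ([] : List (Fin n)) = β
    · rw [hy [] (fun hγ => h (by rw [← hβ, ← hγ]; simp)), mul_zero]
    · rw [hx [] hβ, zero_mul]
  | cons i u ih =>
    intro h
    rw [wt_cons] at h
    refine (congrFun (D.raise_star i x y) u).trans ?_
    rw [Pi.add_apply, ih (raise_mem_wtSh hx) hy (fun e => h (by rw [e]; abel)),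
      ih (D.tau_mem_wtSh i hx) (raise_mem_wtSh hy) (fun e => h (by rw [e]; abel)), add_zero]

/-- Left multiplication by a generator of the quantum shuffle algebra. -/
def ins (j : Fin n) : Module.End R (Sh R n) := D.lower 0 j

theorem raise_ins (i j : Fin n) (x : Sh R n) :
    raise i (D.ins j x) = (D.Q j i : R) • D.ins j (raise i x) + if i = j then x else 0 := by
  split_ifs with h
  · subst h
    simpa [ins] using LinearMap.congr_fun (D.raise_lower_self 0 i) x
  · simpa [ins] using LinearMap.congr_fun (D.raise_lower_of_ne 0 h) x


@[simp] theorem ins_nil (j : Fin n) (x : Sh R n) : D.ins j x [] = 0 := rfl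

theorem tau_ins (i j : Fin n) (x : Sh R n) :
    D.tau i (D.ins j x) = (D.Q j i : R) • D.ins j (D.tau i x) := by
  funext u
  induction u generalizing x with
  | nil => simp [tau, diagOp_apply]
  | cons l u ih =>
    have h1 := congrFun (raise_diagOp (fun c => D.Q c i) l (D.ins j x)) u
    have h2 := congrFun (D.raise_ins l j (D.tau i x)) u
    have h3 := ih (raise l x)
    rw [← tau, raise_ins, map_add, map_smul] at h1
    rw [tau, raise_diagOp, map_smul, ← tau] at h2
    simp only [Pi.smul_apply, Pi.add_apply, smul_eq_mul, raise_apply] at h1 h2 h3 ⊢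
    rw [h1, h2, h3]
    split_ifs with h
    · subst h; ring
    · simp only [map_zero, Pi.zero_apply]; ring

theorem ins_star (j : Fin n) (x y : Sh R n) : D.star (D.ins j x) y = D.ins j (D.star x y) := by
  funext u
  induction u generalizing x y with
  | nil => simp
  | cons i u ih =>
    have h1 := congrFun (D.raise_star i (D.ins j x) y) u
    have h2 := congrFun (D.raise_ins i j (D.star x y)) u
    rw [raise_ins, tau_ins, map_add, map_smul, map_smul] at h1
    rw [raise_star, map_add] at h2
    simp only [LinearMap.add_apply, LinearMap.smul_apply, Pi.smul_apply, Pi.add_apply,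
      smul_eq_mul, raise_apply, ih] at h1 h2 ⊢
    rw [h1, h2]
    split_ifs
    · ring
    · simp only [map_zero, LinearMap.zero_apply, Pi.zero_apply]; ring

/-- Left multiplication by the group-like element of a simple root. -/
def rho (j : Fin n) : Module.End R (Sh R n) := diagOp (D.Q j)

theorem tau_rho (j : Fin n) (x : Sh R n) : D.tau j (D.rho j x) = D.xi j x := by
  funext u
  simp only [tau, rho, diagOp_apply, xi_apply]
  rw [← mul_assoc, ← Units.val_mul]
  congr 2
  induction u with
  | nil => simp
  | cons i u ih =>
    rw [wt_cons, chi_add, ← ih, chi_ee]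
    simp only [List.map_cons, List.prod_cons]
    ac_rfl

theorem lower_eq (c : R) (j : Fin n) (x : Sh R n) :
    D.lower c j x = D.ins j x - c • D.star (D.rho j x) (D.ins j (one R n)) := by
  funext u
  induction u generalizing x with
  | nil => simp
  | cons i u ih =>
    have h1 := congrFun (D.raise_ins i j x) u
    have h2 := congrFun (D.raise_star i (D.rho j x) (D.ins j (one R n))) u
    have h3 : raise i (D.lower c j x) u =
      (if i = j then (1 - c * (D.chi j (wt u) : R)) * x u else 0) +
        (D.Q j i : R) * D.lower c j (raise i x) u := rfl
    rw [rho, raise_diagOp, ← rho, raise_ins, raise_one, map_zero, smul_zero, zero_add, map_smul]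
      at h2
    simp only [LinearMap.smul_apply, Pi.smul_apply, Pi.add_apply, Pi.sub_apply,
      smul_eq_mul, raise_apply, ih] at h1 h2 h3 ⊢
    rw [h1, h2, h3]
    split_ifs with h
    · subst h
      rw [star_one, tau_rho, xi_apply]; ring
    · simp only [map_zero, Pi.zero_apply]; ring

/-- Leading term of the quantum Leibniz rule. -/
theorem raise_pow_star (i : Fin n) {p' : R} (hp : p' * D.Q i i = 1) (a b : ℕ) {x y : Sh R n} {t : R}
    (ht : D.tau i x = t • x) (hx : (raise i ^ (a + 1)) x = 0) (hy : (raise i ^ (b + 1)) y = 0) :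
    (raise i ^ (a + b + 1)) (D.star x y) = 0 ∧ (raise i ^ (a + b)) (D.star x y) =
      (qBinom p' a b * t ^ b) • D.star ((raise i ^ a) x) ((raise i ^ b) y) := by
  have tau_raise : ∀ {x : Sh R n} {t : R}, D.tau i x = t • x →
      D.tau i (raise i x) = (p' * t) • raise i x := by
    intro x t ht
    have h := raise_diagOp (fun c => D.Q c i) i x
    rw [← tau, ht, map_smul] at h
    rw [mul_smul, h, smul_smul, hp, one_smul]
  have leib : ∀ {x y : Sh R n} {t : R}, D.tau i x = t • x → raise i (D.star x y) =
      D.star (raise i x) y + t • D.star x (raise i y) := by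
    intro x y t ht
    rw [raise_star, ht, map_smul, LinearMap.smul_apply]
  suffices h : (raise i ^ (a + b)) (D.star x y) =
      (qBinom p' a b * t ^ b) • D.star ((raise i ^ a) x) ((raise i ^ b) y) by
    refine ⟨?_, h⟩
    have ht' : ∃ s : R, D.tau i ((raise i ^ a) x) = s • (raise i ^ a) x := by
      clear hx h
      induction a with
      | zero => exact ⟨t, ht⟩
      | succ a ih =>
        obtain ⟨s, hs⟩ := ih
        rw [pow_succ', Module.End.mul_apply]
        exact ⟨_, tau_raise hs⟩
    obtain ⟨s, hs⟩ := ht'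
    rw [pow_succ', Module.End.mul_apply, h, map_smul, leib hs,
      ← Module.End.mul_apply (raise i), ← pow_succ', hx, ← Module.End.mul_apply (raise i) _ y,
      ← pow_succ', hy]
    simp
  induction a generalizing x y b t with
  | zero =>
    induction b generalizing x y with
    | zero => simp [qBinom]
    | succ b ih =>
      have hx' : raise i x = 0 := by simpa using hx
      have := ih ht hx (y := raise i y) (by rw [pow_succ] at hy; exact hy)
      rw [← add_assoc, pow_succ, Module.End.mul_apply, leib ht, hx', map_zero,
        LinearMap.zero_apply, zero_add (t • _), map_smul]
      rw [zero_add] at this ⊢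
      rw [this, smul_smul]
      simp only [qBinom, pow_zero, Module.End.one_apply]
      rw [pow_succ (raise i), Module.End.mul_apply]
      congr 1; ring
  | succ a iha =>
    induction b generalizing x y t with
    | zero =>
      have hy' : raise i y = 0 := by simpa using hy
      have := iha 0 (tau_raise ht) (by rw [pow_succ] at hx; exact hx) hy
      rw [add_zero] at this ⊢
      rw [pow_succ, Module.End.mul_apply, leib ht, hy', map_zero, smul_zero, add_zero, this]
      cases a <;> simp [qBinom]
    | succ b ihb =>
      have h1 := iha (b + 1) (tau_raise ht) (by rw [pow_succ] at hx; exact hx) hy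
      have h2 := ihb ht hx (y := raise i y) (by rw [pow_succ] at hy; exact hy)
      rw [show a + 1 + (b + 1) = a + (b + 1) + 1 by ring, pow_succ, Module.End.mul_apply, leib ht,
        map_add, map_smul, h1, show a + (b + 1) = a + 1 + b by ring, h2,
        ← Module.End.mul_apply (raise i ^ a), ← pow_succ, ← Module.End.mul_apply (raise i ^ b),
        ← pow_succ, qBinom]
      module

theorem _root_.Stmt16.Str.star [IsDomain R] {w : List (Fin n)} {m m' : ℕ → ℕ} {x y : Sh R n}
    {β : Fin n → ℤ} (hβ : x ∈ wtSh R β) (hx : Str w m x) (hy : Str w m' y) :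
    Str w (m + m') (D.star x y) := by
  induction w generalizing m m' x y β with
  | nil =>
    obtain ⟨c, hc, rfl⟩ := hx
    obtain ⟨c', hc', rfl⟩ := hy
    exact ⟨c * c', mul_ne_zero hc hc', by simp [mul_smul, smul_comm c c']⟩
  | cons i w ih =>
    set t : Rˣ := ∏ l, D.Q l i ^ β l
    have ht : D.tau i x = (t : R) • x := diagOp_of_mem _ hβ
    obtain ⟨h0, h1⟩ := D.raise_pow_star i (p' := ((D.Q i i)⁻¹ : Rˣ)) (Units.inv_mul _) (m 0) (m' 0)
      ht hx.1 hy.1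
    refine ⟨h0, ?_⟩
    change Str w (fun r => (m + m') (r + 1)) ((raise i ^ (m 0 + m' 0)) (D.star x y))
    rw [h1]
    refine Str.smul (ih (raise_pow_mem_wtSh hβ (m 0)) hx.2 hy.2) (mul_ne_zero ?_ ?_)
    · refine qBinom_ne_zero (fun s => ?_) _ _
      rw [D.self, ← zpow_neg, ← Units.val_pow_eq_pow_val, ← zpow_natCast, ← zpow_mul]
      refine D.one_sub_zpow_ne_zero (mul_ne_zero (neg_ne_zero.mpr (D.pos i).ne') ?_)
      positivity
    · rw [← Units.val_pow_eq_pow_val]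
      exact Units.ne_zero _

end QDatum

/-- Vectors whose strings along a word have different exponents are linearly independent. -/
theorem Str.sum_eq_zero {R : Type*} [CommRing R] [IsDomain R] {n : ℕ} {ι : Type*}
    (w : List (Fin n)) (s : Finset ι) (g : ι → R) (y : ι → Sh R n) (m : ι → ℕ → ℕ)
    (hy : ∀ i ∈ s, Str w (m i) (y i))
    (hm : ∀ i ∈ s, ∀ j ∈ s, (∀ r < w.length, m i r = m j r) → i = j)
    (h : ∑ i ∈ s, g i • y i = 0) : ∀ i ∈ s, g i = 0 := by
  classical
  induction w generalizing s y m with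
  | nil =>
    intro i hi
    have hs : s = {i} := Finset.eq_singleton_iff_unique_mem.mpr
      ⟨hi, fun j hj => hm j hj i hi (by simp)⟩
    obtain ⟨c, hc, e⟩ := hy i hi
    rw [hs, Finset.sum_singleton, e, smul_smul] at h
    have := congrFun h []
    simpa [one, hc] using this
  | cons p w ih =>
    by_contra! hcon
    obtain ⟨i₀, hi₀, hg₀⟩ := hcon
    have hne : (s.filter fun i => g i ≠ 0).Nonempty := ⟨i₀, by simp [hi₀, hg₀]⟩
    obtain ⟨i₁, hi₁, hmax⟩ := Finset.exists_max_image _ (fun i => m i 0) hne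
    rw [Finset.mem_filter] at hi₁
    set M := m i₁ 0 with hM
    have hzero : ∀ i ∈ s, m i 0 ≠ M → g i • (raise p ^ M) (y i) = 0 := by
      intro i hi hne
      by_cases hg : g i = 0
      · rw [hg, zero_smul]
      · have h1 : m i 0 + 1 ≤ M := lt_of_le_of_ne (hmax i (by simp [hi, hg])) hne
        obtain ⟨l, hl⟩ := Nat.exists_eq_add_of_le h1
        rw [hl, add_comm, pow_add, Module.End.mul_apply, (hy i hi).1, map_zero, smul_zero]
    have key := ih (s.filter fun i => m i 0 = M) (fun i => (raise p ^ M) (y i))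
      (fun i r => m i (r + 1)) ?_ ?_ ?_
    · exact hi₁.2 (key i₁ (by simp [hi₁.1, hM]))
    · intro i hi
      rw [Finset.mem_filter] at hi
      have := (hy i hi.1).2
      rwa [hi.2] at this
    · intro i hi j hj hij
      rw [Finset.mem_filter] at hi hj
      refine hm i hi.1 j hj.1 fun r hr => ?_
      cases r with
      | zero => rw [hi.2, hj.2]
      | succ r => exact hij r (by simpa using hr)
    · have h' := congrArg (raise p ^ M) h
      rw [map_zero, map_sum] at h'
      simp only [map_smul] at h'
      rw [Finset.sum_filter]
      refine Eq.trans ?_ h'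
      refine Finset.sum_congr rfl fun i hi => ?_
      split_ifs with hc
      · rfl
      · exact (hzero i hi hc).symm

namespace QDatum

variable {R : Type*} [CommRing R] {n : ℕ} (D : QDatum R n)

/-- The monomials in the quantum shuffle algebra. -/
def word (u : List (Fin n)) : Sh R n := u.foldr (fun j x => D.ins j x) (one R n)

@[simp] theorem word_nil : D.word [] = one R n := rfl
@[simp] theorem word_cons (j : Fin n) (u : List (Fin n)) :
    D.word (j :: u) = D.ins j (D.word u) := rfl

theorem word_mem_wtSh (u : List (Fin n)) : D.word u ∈ wtSh R (wt u) := by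
  induction u with
  | nil => exact one_mem_wtSh
  | cons j u ih => exact wtSh_congr (by rw [wt_cons, add_comm]) (D.lower_mem_wtSh 0 j ih)

theorem word_star (u u' : List (Fin n)) : D.star (D.word u) (D.word u') = D.word (u ++ u') := by
  induction u with
  | nil => simp
  | cons j u ih => rw [word_cons, ins_star, ih]; rfl

/-- The span of the monomials of length at most `N`. -/
def filt (N : ℕ) : Submodule R (Sh R n) :=
  Submodule.span R {x | ∃ u : List (Fin n), u.length ≤ N ∧ D.word u = x}

theorem word_mem_filt {u : List (Fin n)} {N : ℕ} (h : u.length ≤ N) : D.word u ∈ D.filt N :=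
  Submodule.subset_span ⟨u, h, rfl⟩

theorem filt_mono {N N' : ℕ} (h : N ≤ N') : D.filt N ≤ D.filt N' :=
  Submodule.span_mono fun _ ⟨u, hu, e⟩ => ⟨u, hu.trans h, e⟩

theorem star_mem_filt {N N' : ℕ} {x y : Sh R n} (hx : x ∈ D.filt N) (hy : y ∈ D.filt N') :
    D.star x y ∈ D.filt (N + N') := by
  have h := Submodule.apply_mem_map₂ D.star hx hy
  rw [filt, filt, Submodule.map₂_span_span] at h
  refine Submodule.span_le.mpr ?_ h
  rintro _ ⟨_, ⟨u, hu, rfl⟩, _, ⟨u', hu', rfl⟩, rfl⟩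
  rw [SetLike.mem_coe]
  change D.star (D.word u) (D.word u') ∈ D.filt (N + N')
  rw [word_star]
  exact D.word_mem_filt (by rw [List.length_append]; omega)

theorem low_mem_filt (j : Fin n) {N : ℕ} {x : Sh R n} (hx : x ∈ D.filt N) :
    D.low j x ∈ D.filt (N + 1) := by
  refine (Submodule.span_le (p := (D.filt (N + 1)).comap (D.low j))).mpr ?_ hx
  rintro _ ⟨u, hu, rfl⟩
  change D.low j (D.word u) ∈ D.filt (N + 1)
  rw [low, lower_eq, rho, diagOp_of_mem _ (D.word_mem_wtSh u), map_smul, LinearMap.smul_apply]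
  refine sub_mem (D.word_mem_filt (u := j :: u) (by simpa using hu))
    (Submodule.smul_mem _ _ (Submodule.smul_mem _ _ ?_))
  exact D.star_mem_filt (D.word_mem_filt hu) (D.word_mem_filt (u := [j]) le_rfl)

theorem low_pow_mem_filt (j : Fin n) {N : ℕ} {x : Sh R n} (hx : x ∈ D.filt N) (m : ℕ) :
    (D.low j ^ m) x ∈ D.filt (N + m) := by
  induction m with
  | zero => simpa using hx
  | succ m ih => rw [pow_succ']; exact D.low_mem_filt j ih

theorem exists_extVec_mem_filt (w : List (Fin n)) : ∃ N, D.extVec w ∈ D.filt N := by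
  induction w with
  | nil => exact ⟨0, D.word_mem_filt (u := []) le_rfl⟩
  | cons i w ih =>
    obtain ⟨N, hN⟩ := ih
    exact ⟨_, D.low_pow_mem_filt i hN _⟩

/-- The possible filtration degrees and string exponents of homogeneous elements. -/
def strMonoid [IsDomain R] (w : List (Fin n)) : AddSubmonoid (ℕ × (ℕ → ℕ)) where
  carrier := {a | ∃ β, ∃ x ∈ wtSh R β, x ∈ D.filt a.1 ∧ Str w a.2 x}
  zero_mem' := by
    have h : Str ([] : List (Fin n)) 0 (one R n) := ⟨1, one_ne_zero, (one_smul _ _).symm⟩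
    exact ⟨0, one R n, one_mem_wtSh, D.word_mem_filt (u := []) le_rfl, h.append fun _ _ => rfl⟩
  add_mem' := by
    rintro a b ⟨β, x, hx, hxf, hxs⟩ ⟨γ, y, hy, hyf, hys⟩
    exact ⟨β + γ, D.star x y, D.star_mem_wtSh hx hy, D.star_mem_filt hxf hyf,
      Str.star D hx hxs hys⟩

/-- The string exponents of the extremal vector of an initial segment. -/
def prefExp (w : List (Fin n)) (p : ℕ) : ℕ → ℕ := D.extExp (w.take (p + 1))

theorem prefExp_self {w : List (Fin n)} {p : ℕ} (hp : p < w.length) : D.prefExp w p p = 1 := by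
  have := D.extExp_append_singleton (w.take p) w[p]
  rwa [List.take_append_getElem hp, List.length_take, min_eq_left hp.le] at this

theorem prefExp_of_lt {w : List (Fin n)} {p r : ℕ} (h : p < r) : D.prefExp w p r = 0 :=
  D.extExp_of_length_le _ (by rw [List.length_take]; omega)

theorem exists_mem_strMonoid [IsDomain R] {w : List (Fin n)} (hw : PosWord D.A w) :
    ∃ N, ∀ p : Fin w.length, (N, D.prefExp w p) ∈ D.strMonoid w := by
  choose N hN using fun p : Fin w.length => D.exists_extVec_mem_filt (w.take (p + 1))
  refine ⟨∑ p, N p, fun p => ?_⟩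
  have hpos : PosWord D.A (w.take (p + 1)) :=
    PosWord.of_append (a := []) (b := w.drop (p + 1)) (by simpa using hw)
  refine ⟨_, _, D.extVec_mem_wtSh hpos,
    D.filt_mono (Finset.single_le_sum (fun _ _ => Nat.zero_le _) (Finset.mem_univ p)) (hN p), ?_⟩
  have := (D.str_extVec hpos).append (t := w.drop (p + 1))
    (fun r hr => D.extExp_of_length_le _ hr)
  rwa [List.take_append_drop] at this

/-- Linear independence of the monomials in the extremal vectors of the initial segments of a
positive word. -/
theorem exists_linearIndependent [IsDomain R] {w : List (Fin n)} (hw : PosWord D.A w) :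
    ∃ N, ∀ K, ∃ y : (Fin w.length → Fin (K + 1)) → Sh R n, LinearIndependent R y ∧
      ∀ b, y b ∈ D.filt (w.length * K * N) := by
  obtain ⟨N, hN⟩ := D.exists_mem_strMonoid hw
  refine ⟨N, fun K => ?_⟩
  have hmem : ∀ b : Fin w.length → Fin (K + 1),
      ∑ p, (b p : ℕ) • (N, D.prefExp w p) ∈ D.strMonoid w := fun b =>
    sum_mem fun p _ => nsmul_mem (hN p) _
  choose β y hβ hf hs using hmem
  refine ⟨y, ?_, fun b => D.filt_mono ?_ (hf b)⟩
  · rw [linearIndependent_iff']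
    refine fun s g h => Str.sum_eq_zero w s g y _ (fun b _ => hs b) (fun b _ b' _ hbb => ?_) h
    by_contra hne
    have hne' : (Finset.univ.filter fun p => b p ≠ b' p).Nonempty := by
      obtain ⟨p, hp⟩ := Function.ne_iff.mp hne
      exact ⟨p, by simpa using hp⟩
    obtain ⟨p, hp, hmax⟩ := Finset.exists_max_image _ id hne'
    have e := hbb p p.2
    simp only [Prod.snd_sum, Finset.sum_apply, Prod.smul_snd, Pi.smul_apply] at e
    rw [← Finset.add_sum_erase _ _ (Finset.mem_univ p), D.prefExp_self p.2,
      ← Finset.add_sum_erase _ (fun q => (b' q : ℕ) • D.prefExp w q p) (Finset.mem_univ p),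
      D.prefExp_self p.2] at e
    have e2 : ∑ q ∈ Finset.univ.erase p, (b q : ℕ) • D.prefExp w q p =
        ∑ q ∈ Finset.univ.erase p, (b' q : ℕ) • D.prefExp w q p := by
      refine Finset.sum_congr rfl fun q hq => ?_
      rcases lt_or_gt_of_ne (Finset.ne_of_mem_erase hq) with hlt | hlt
      · rw [D.prefExp_of_lt hlt, smul_zero, smul_zero]
      · by_cases hbq : b q = b' q
        · rw [hbq]
        · exact absurd (hmax q (by simpa using hbq)) (not_le.mpr hlt)
    rw [e2] at e
    refine (Finset.mem_filter.mp hp).2 (Fin.ext ?_)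
    simpa using e
  · simp only [Prod.fst_sum, Prod.smul_fst, smul_eq_mul]
    calc ∑ p, (b p : ℕ) * N ≤ ∑ _p : Fin w.length, K * N :=
          Finset.sum_le_sum fun p _ => Nat.mul_le_mul_right _ (by omega)
      _ = w.length * K * N := by simp [mul_assoc]

end QDatum

section Deformation

variable {k : Type*} [Field k]

/-- The one-parameter deformation `q + X` of a nonzero scalar. -/
def deformUnit (q : kˣ) : (PowerSeries k)ˣ :=
  (PowerSeries.isUnit_iff_constantCoeff (φ := PowerSeries.C (q : k) + PowerSeries.X)
    |>.mpr (by simp)).unit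

theorem val_deformUnit (q : kˣ) :
    (deformUnit q : PowerSeries k) = PowerSeries.C (q : k) + PowerSeries.X := rfl

theorem map_deformUnit (q : kˣ) :
    Units.map (PowerSeries.constantCoeff (R := k)).toMonoidHom (deformUnit q) = q := by
  ext
  change PowerSeries.constantCoeff (deformUnit q : PowerSeries k) = q
  simp [val_deformUnit]

theorem deformUnit_zpow_ne_one [CharZero k] (q : kˣ) {z : ℤ} (hz : z ≠ 0) :
    deformUnit q ^ z ≠ 1 := by
  have key : ∀ m : ℕ, deformUnit q ^ (m + 1) ≠ 1 := by
    intro m h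
    have h1 := congrArg Units.val h
    rw [Units.val_pow_eq_pow_val, Units.val_one] at h1
    have h2 := congrArg (PowerSeries.derivative k) h1
    rw [Derivation.leibniz_pow, Derivation.map_one_eq_zero] at h2
    have h3 : PowerSeries.derivative k (deformUnit q : PowerSeries k) = 1 := by
      rw [val_deformUnit, map_add]
      simp
    rw [h3, smul_eq_mul, mul_one, ← Units.val_pow_eq_pow_val, nsmul_eq_mul] at h2
    have h4 := (mul_eq_zero.mp h2).resolve_right (Units.ne_zero _)
    have h5 := congrArg PowerSeries.constantCoeff h4
    rw [map_natCast, map_zero, Nat.cast_eq_zero] at h5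
    omega
  obtain ⟨m, rfl | rfl⟩ := z.eq_nat_or_neg
  · obtain ⟨l, rfl⟩ := Nat.exists_eq_succ_of_ne_zero (n := m) (by simpa using hz)
    rw [zpow_natCast]
    exact key l
  · obtain ⟨l, rfl⟩ := Nat.exists_eq_succ_of_ne_zero (n := m) (by simpa using hz)
    rw [zpow_neg, zpow_natCast, inv_ne_one]
    exact key l

/-- Every braiding of Cartan type deforms to one whose parameter is not a root of unity. -/
theorem exists_qDatum [CharZero k] {n : ℕ} (A : Matrix (Fin n) (Fin n) ℤ) (hdiag : ∀ i, A i i = 2)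
    (hoff : ∀ i j, i ≠ j → A i j ≤ 0) (d : Fin n → ℤ) (hd : ∀ i, 0 < d i)
    (hsym : ∀ i j, d i * A i j = d j * A j i) (q : kˣ) (Q : Fin n → Fin n → kˣ)
    (hQd : ∀ i, Q i i = q ^ d i) (hQo : ∀ i j, i ≠ j → Q i j * Q j i = q ^ (d i * A i j)) :
    ∃ D : QDatum (PowerSeries k) n, D.A = A ∧
      ∀ i j, PowerSeries.constantCoeff (D.Q i j : PowerSeries k) = Q i j := by
  set c := Units.map (PowerSeries.constantCoeff (R := k)).toMonoidHom with hc
  set e := Units.map (PowerSeries.C (R := k)).toMonoidHom with he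
  have hce : ∀ a, c (e a) = a := by
    intro a
    ext
    simp [hc, he]
  have hcv : ∀ z : ℤ, c (deformUnit q ^ z) = q ^ z := by
    intro z
    rw [map_zpow, map_deformUnit]
  let P : Fin n → Fin n → (PowerSeries k)ˣ := fun i j =>
    if i = j then deformUnit q ^ d i else
      if i < j then e (Q i j) else deformUnit q ^ (d i * A i j) * (e (Q j i))⁻¹
  refine ⟨⟨A, d, deformUnit q, P, hdiag, hoff, hd, hsym, fun i => by simp [P], ?_,
    fun z hz => deformUnit_zpow_ne_one q hz⟩, rfl, fun i j => ?_⟩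
  · intro i j hij
    rcases lt_or_gt_of_ne hij with h | h
    · simp only [P, hij, hij.symm, h, h.not_gt, if_true, if_false]
      rw [hsym i j, mul_comm (e (Q i j)), inv_mul_cancel_right]
    · simp only [P, hij, hij.symm, h, h.not_gt, if_true, if_false]
      rw [inv_mul_cancel_right]
  · change ((c (P i j) : kˣ) : k) = _
    congr 1
    by_cases hij : i = j
    · subst hij
      simp only [P, if_true]
      rw [hcv, hQd]
    · rcases lt_or_gt_of_ne hij with h | h
      · simp only [P, hij, h, if_true, if_false]
        exact hce _
      · simp only [P, hij, h.not_gt, if_false]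
        rw [map_mul, map_inv, hcv, hce, ← hQo i j hij, mul_inv_cancel_right]

end Deformation

section Growth

variable {k B : Type*} [Field k] [Ring B] [Algebra k B]

/-- Polynomial lower bounds on the growth of a finite set bound the Gelfand–Kirillov dimension. -/
theorem le_GKdim_of_growth (S : Finset B) (N E : ℕ)
    (h : ∀ d K : ℕ, K * (E + 1) ≤ d → (K + 1) ^ N ≤
      Module.finrank k ((Submodule.span k (insert (1 : B) (S : Set B))) ^ d : Submodule k B)) :
    (N : ENNReal) ≤ GKdim k B := by
  refine le_trans ?_ (le_iSup _ S)
  have hlim : Filter.Tendsto (fun d : ℕ => ENNReal.ofReal (N * (1 - Real.log (E + 1) / Real.log d)))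
      Filter.atTop (nhds (N : ENNReal)) := by
    have h1 : Filter.Tendsto (fun d : ℕ => Real.log (E + 1) / Real.log d) Filter.atTop (nhds 0) :=
      (Real.tendsto_log_atTop.comp tendsto_natCast_atTop_atTop).const_div_atTop _
    have h2 := ENNReal.tendsto_ofReal ((h1.const_sub 1).const_mul (N : ℝ))
    simpa using h2
  rw [← hlim.limsup_eq]
  refine Filter.limsup_le_limsup ?_
  filter_upwards [Filter.eventually_ge_atTop 2] with d hd
  refine ENNReal.ofReal_le_ofReal ?_
  have hd' : (1 : ℝ) < d := by exact_mod_cast hd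
  have hlog : 0 < Real.log d := Real.log_pos hd'
  have hE : (0 : ℝ) < E + 1 := by positivity
  have hlow : ((d : ℝ) / (E + 1)) ^ N ≤ (Module.finrank k
      ((Submodule.span k (insert (1 : B) (S : Set B))) ^ d : Submodule k B) : ℝ) := by
    have h1 := h d (d / (E + 1)) (Nat.div_mul_le_self _ _)
    refine le_trans ?_ (Nat.cast_le (α := ℝ).mpr h1)
    push_cast
    refine pow_le_pow_left₀ (by positivity) ?_ N
    rw [div_le_iff₀ hE]
    have h2 := Nat.lt_div_mul_add (a := d) (b := E + 1) (Nat.succ_pos E)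
    have h3 : (d : ℝ) < ((d / (E + 1) : ℕ) : ℝ) * (E + 1) + (E + 1) := by exact_mod_cast h2
    linarith
  have hpos : (0 : ℝ) < (d : ℝ) / (E + 1) := by positivity
  calc (N : ℝ) * (1 - Real.log (E + 1) / Real.log d)
      = Real.logb d (((d : ℝ) / (E + 1)) ^ N) := by
        rw [Real.logb, Real.log_pow, Real.log_div (by positivity) hE.ne']
        field_simp
    _ ≤ _ := Real.logb_le_logb_of_le hd' (by positivity) hlow

end Growth

theorem qb_smul_ee_add {k : Type*} [Field k] {n : ℕ} (Q : Fin n → Fin n → kˣ) (i j : Fin n)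
    (m : ℕ) :
    qb Q (ee i) ((m : ℤ) • ee i + ee j) = Q i i ^ m * Q i j := by
  have h1 : ∀ a, ∏ b, Q a b ^ (ee i a * ((m : ℤ) • ee i + ee j) b) =
      if a = i then Q i i ^ m * Q i j else 1 := by
    intro a
    split_ifs with h
    · subst h
      simp only [ee_apply, if_true, one_mul, Pi.add_apply, Pi.smul_apply, smul_eq_mul, zpow_add,
        Finset.prod_mul_distrib, mul_ite, mul_one, mul_zero]
      congr 1
      · rw [Finset.prod_eq_single a]
        · simp
        · intro b _ hb; simp [hb]
        · simp
      · rw [Finset.prod_eq_single j]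
        · simp
        · intro b _ hb; simp [hb]
        · simp
    · simp [ee_apply, h]
  rw [qb, Finset.prod_congr rfl fun a _ => h1 a]
  simp

theorem adIter_snd {k : Type*} [Field k] {n : ℕ} (Q : Fin n → Fin n → kˣ) (i j : Fin n) (m : ℕ) :
    (adIter Q i m (gen Q j)).2 = (m : ℤ) • ee i + ee j := by
  induction m with
  | zero => simp [adIter, gen]
  | succ m ih =>
    change ee i + (adIter Q i m (gen Q j)).2 = _
    rw [ih]; push_cast; module

namespace QDatum

variable {k : Type*} [Field k] {n : ℕ} (D : QDatum (PowerSeries k) n)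

/-- The algebra of operators generated by left multiplications by the generators. -/
def opAlg : Subalgebra (PowerSeries k) (Module.End (PowerSeries k) (Sh (PowerSeries k) n)) :=
  Algebra.adjoin _ (Set.range D.ins)

theorem ins_mem_opAlg (i : Fin n) : D.ins i ∈ D.opAlg := Algebra.subset_adjoin ⟨i, rfl⟩

/-- The operators divisible by `X` in `opAlg`. -/
def opIdeal : Submodule (PowerSeries k) (Module.End (PowerSeries k) (Sh (PowerSeries k) n)) :=
  (Subalgebra.toSubmodule D.opAlg).map (LinearMap.lsmul (PowerSeries k) _ PowerSeries.X)

theorem mem_opIdeal {T : Module.End (PowerSeries k) (Sh (PowerSeries k) n)} :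
    T ∈ D.opIdeal ↔ ∃ y ∈ D.opAlg, (PowerSeries.X : PowerSeries k) • y = T := Iff.rfl

theorem mul_mem_opIdeal {T U : Module.End (PowerSeries k) (Sh (PowerSeries k) n)}
    (hT : T ∈ D.opAlg) (hU : U ∈ D.opIdeal) : T * U ∈ D.opIdeal := by
  obtain ⟨y, hy, rfl⟩ := hU
  exact ⟨T * y, D.opAlg.mul_mem hT hy, (mul_smul_comm _ _ _).symm⟩

theorem mem_opIdeal_mul {T U : Module.End (PowerSeries k) (Sh (PowerSeries k) n)}
    (hT : T ∈ D.opIdeal) (hU : U ∈ D.opAlg) : T * U ∈ D.opIdeal := by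
  obtain ⟨y, hy, rfl⟩ := hT
  exact ⟨y * U, D.opAlg.mul_mem hy hU, (smul_mul_assoc _ _ _).symm⟩

/-- The free algebra acting on the quantum shuffle algebra. -/
def freeAct : FreeAlgebra k (Fin n) →ₐ[k] Module.End (PowerSeries k) (Sh (PowerSeries k) n) :=
  FreeAlgebra.lift k D.ins

@[simp] theorem freeAct_ι (i : Fin n) : D.freeAct (FreeAlgebra.ι k i) = D.ins i :=
  FreeAlgebra.lift_ι_apply _ _

theorem smul_eq_C_smul (c : k) (T : Module.End (PowerSeries k) (Sh (PowerSeries k) n)) :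
    c • T = (PowerSeries.C c : PowerSeries k) • T := by
  ext x u m
  simp

theorem freeAct_mem_opAlg (f : FreeAlgebra k (Fin n)) : D.freeAct f ∈ D.opAlg := by
  induction f using FreeAlgebra.induction with
  | grade0 r =>
    rw [AlgHom.commutes, Algebra.algebraMap_eq_smul_one, smul_eq_C_smul]
    exact D.opAlg.smul_mem (one_mem _) _
  | grade1 i => rw [freeAct_ι]; exact D.ins_mem_opAlg i
  | mul a b ha hb => rw [map_mul]; exact mul_mem ha hb
  | add a b ha hb => rw [map_add]; exact add_mem ha hb

variable {Q : Fin n → Fin n → kˣ}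

theorem freeAct_adIter
    (hQ : ∀ i j, PowerSeries.constantCoeff (D.Q i j : PowerSeries k) = Q i j)
    (i j : Fin n) (m : ℕ) :
    D.freeAct (adIter Q i m (gen Q j)).1 -
      serreElt (D.Q i i : PowerSeries k) (D.Q i j) (D.ins i) (D.ins j) m ∈ D.opIdeal := by
  induction m with
  | zero => simp [adIter, gen, serreElt]
  | succ m ih =>
    set S := serreElt (D.Q i i : PowerSeries k) (D.Q i j) (D.ins i) (D.ins j) m with hS
    set f := (adIter Q i m (gen Q j)).1 with hf
    have h1 : (adIter Q i (m + 1) (gen Q j)).1 = FreeAlgebra.ι k i * f -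
        ((Q i i ^ m * Q i j : kˣ) : k) • (f * FreeAlgebra.ι k i) := by
      rw [← qb_smul_ee_add Q i j m, ← adIter_snd Q i j m]; rfl
    obtain ⟨r, hr⟩ : (PowerSeries.X : PowerSeries k) ∣
        PowerSeries.C ((Q i i ^ m * Q i j : kˣ) : k) - (D.Q i i : PowerSeries k) ^ m * D.Q i j := by
      rw [PowerSeries.X_dvd_iff]
      simp [hQ]
    have h2 : D.freeAct (adIter Q i (m + 1) (gen Q j)).1 -
        serreElt (D.Q i i : PowerSeries k) (D.Q i j) (D.ins i) (D.ins j) (m + 1) =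
        D.ins i * (D.freeAct f - S) - ((D.Q i i : PowerSeries k) ^ m * D.Q i j) •
          ((D.freeAct f - S) * D.ins i) -
          (PowerSeries.X : PowerSeries k) • (r • (D.freeAct f * D.ins i)) := by
      rw [h1, smul_smul, ← hr, map_sub, map_smul, map_mul, map_mul, freeAct_ι, smul_eq_C_smul,
        serreElt, ← hS, sub_mul, mul_sub]
      simp only [sub_smul, smul_sub]
      abel
    rw [h2]
    refine sub_mem (sub_mem (D.mul_mem_opIdeal (D.ins_mem_opAlg i) ih)
      (D.opIdeal.smul_mem _ (D.mem_opIdeal_mul ih (D.ins_mem_opAlg i)))) ?_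
    exact ⟨_, D.opAlg.smul_mem (mul_mem (D.freeAct_mem_opAlg f) (D.ins_mem_opAlg i)) r, rfl⟩

theorem freeAct_rel
    (hQ : ∀ i j, PowerSeries.constantCoeff (D.Q i j : PowerSeries k) = Q i j) {i j : Fin n}
    (hij : i ≠ j) : D.freeAct (adIter Q i (1 - D.A i j).toNat (gen Q j)).1 ∈ D.opIdeal := by
  have h := D.freeAct_adIter hQ i j (1 - D.A i j).toNat
  rw [show serreElt (D.Q i i : PowerSeries k) (D.Q i j) (D.ins i) (D.ins j)
    (1 - D.A i j).toNat = 0 from D.serreElt_lower_eq_zero (fun _ => 0) hij, sub_zero] at h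
  exact h

/-- The congruence of the free algebra given by the reduction modulo `X` of its action. -/
def redCon : RingCon (FreeAlgebra k (Fin n)) where
  r f g := D.freeAct f - D.freeAct g ∈ D.opIdeal
  iseqv := ⟨fun f => by simp, fun {f g} h => by simpa using neg_mem h,
    fun {f g h} h1 h2 => by simpa using add_mem h1 h2⟩
  add' {a b c d} h1 h2 := by
    have := add_mem h1 h2
    rw [map_add, map_add]
    convert this using 1
    abel
  mul' {a b c d} h1 h2 := by
    have := add_mem (D.mem_opIdeal_mul h1 (D.freeAct_mem_opAlg c))
      (D.mul_mem_opIdeal (D.freeAct_mem_opAlg b) h2)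
    rw [map_mul, map_mul]
    convert this using 1
    simp only [sub_mul, mul_sub]
    abel

theorem freeAct_mem_opIdeal_of_mk_eq_zero
    {rel : FreeAlgebra k (Fin n) → FreeAlgebra k (Fin n) → Prop}
    (hrel : ∀ f g, rel f g → D.freeAct f - D.freeAct g ∈ D.opIdeal) {f : FreeAlgebra k (Fin n)}
    (hf : RingQuot.mkRingHom rel f = 0) : D.freeAct f ∈ D.opIdeal := by
  have h := RingQuot.lift_mkRingHom_apply (r := rel) D.redCon.mk'
    (fun f g hfg => (RingCon.eq D.redCon).mpr (hrel f g hfg)) f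
  rw [hf, map_zero] at h
  have h2 : D.redCon f 0 := (RingCon.eq D.redCon).mp h.symm
  have h3 : D.freeAct f - D.freeAct 0 ∈ D.opIdeal := h2
  simpa using h3

end QDatum

theorem sum_wt {n : ℕ} (u : List (Fin n)) : ∑ l, wt u l = u.length := by
  induction u with
  | nil => simp [wt]
  | cons i u ih => simp [wt_cons, Finset.sum_add_distrib, ih, ee, add_comm]

/-- The restriction of functions to words of length at most `d`. -/
def trunc (R : Type*) [CommRing R] (n d : ℕ) : Module.End R (Sh R n) where
  toFun x u := if u.length ≤ d then x u else 0
  map_add' x y := by funext u; by_cases h : u.length ≤ d <;> simp [h]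
  map_smul' c x := by funext u; by_cases h : u.length ≤ d <;> simp [h]

theorem trunc_apply {R : Type*} [CommRing R] {n d : ℕ} (x : Sh R n) (u : List (Fin n)) :
    trunc R n d x u = if u.length ≤ d then x u else 0 := rfl

/-- The elements of degree at most one of the free algebra. -/
def freeDegLE (k : Type*) [Field k] (n : ℕ) : Submodule k (FreeAlgebra k (Fin n)) :=
  Submodule.span k (insert 1 (Set.range (FreeAlgebra.ι k)))

theorem one_mem_freeDegLE_pow (k : Type*) [Field k] (n d : ℕ) : 1 ∈ freeDegLE k n ^ d := by
  have h := Submodule.pow_mem_pow (freeDegLE k n)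
    (Submodule.subset_span (Set.mem_insert 1 (Set.range (FreeAlgebra.ι k)))) d
  rwa [one_pow] at h

theorem prod_mem_freeDegLE_pow (k : Type*) [Field k] {n : ℕ} {u : List (Fin n)} {d : ℕ}
    (h : u.length ≤ d) : (u.map (FreeAlgebra.ι k)).prod ∈ freeDegLE k n ^ d := by
  induction u generalizing d with
  | nil => exact one_mem_freeDegLE_pow k n d
  | cons i u ih =>
    obtain ⟨d, rfl⟩ := Nat.exists_eq_succ_of_ne_zero (n := d) (by rintro rfl; simp at h)
    rw [List.map_cons, List.prod_cons, Nat.succ_eq_add_one, pow_succ']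
    exact Submodule.mul_mem_mul (Submodule.subset_span (Set.mem_insert_of_mem _ ⟨i, rfl⟩))
      (ih (by simpa using h))

namespace QDatum

section

variable {R : Type*} [CommRing R] {n : ℕ} (D : QDatum R n)

theorem trunc_word (u : List (Fin n)) (d : ℕ) :
    trunc R n d (D.word u) = if u.length ≤ d then D.word u else 0 := by
  funext t
  rw [trunc_apply]
  by_cases h : t.length = u.length
  · rw [h]; split_ifs <;> rfl
  · have h0 : D.word u t = 0 := by
      refine D.word_mem_wtSh u t fun e => h ?_
      have := sum_wt t
      rw [e, sum_wt] at this
      exact_mod_cast this.symm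
    split_ifs <;> simp [h0]

theorem trunc_eq_self {d : ℕ} {x : Sh R n} (hx : x ∈ D.filt d) : trunc R n d x = x := by
  refine LinearMap.eqOn_span (g := LinearMap.id) ?_ hx
  rintro _ ⟨u, hu, rfl⟩
  rw [trunc_word, if_pos hu, LinearMap.id_apply]

theorem trunc_mem_filt (d : ℕ) {x : Sh R n} (hx : x ∈ Submodule.span R (Set.range D.word)) :
    trunc R n d x ∈ D.filt d := by
  refine (Submodule.span_le (p := (D.filt d).comap (trunc R n d))).mpr ?_ hx
  rintro _ ⟨u, rfl⟩
  rw [SetLike.mem_coe, Submodule.mem_comap, trunc_word]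
  split_ifs with h
  · exact D.word_mem_filt h
  · exact zero_mem _

theorem ins_mem_span_word (i : Fin n) {x : Sh R n}
    (hx : x ∈ Submodule.span R (Set.range D.word)) :
    D.ins i x ∈ Submodule.span R (Set.range D.word) := by
  refine (Submodule.span_le (p := (Submodule.span R (Set.range D.word)).comap (D.ins i))).mpr ?_ hx
  rintro _ ⟨u, rfl⟩
  exact Submodule.subset_span ⟨i :: u, rfl⟩

theorem ins_mem_filt (i : Fin n) {N : ℕ} {x : Sh R n} (hx : x ∈ D.filt N) :
    D.ins i x ∈ D.filt (N + 1) := by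
  refine (Submodule.span_le (p := (D.filt (N + 1)).comap (D.ins i))).mpr ?_ hx
  rintro _ ⟨u, hu, rfl⟩
  exact D.word_mem_filt (u := i :: u) (by simpa using hu)

theorem filt_fg (d : ℕ) : (D.filt d).FG := by
  have h : {x | ∃ u : List (Fin n), u.length ≤ d ∧ D.word u = x} =
      D.word '' {u : List (Fin n) | u.length ≤ d} := rfl
  rw [filt, h]
  exact Submodule.fg_span ((List.finite_length_le (Fin n) d).image _)

end

variable {k : Type*} [Field k] {n : ℕ} (D : QDatum (PowerSeries k) n)

theorem opAlg_apply_mem {T : Module.End (PowerSeries k) (Sh (PowerSeries k) n)}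
    (hT : T ∈ D.opAlg) : ∀ x ∈ Submodule.span (PowerSeries k) (Set.range D.word),
      T x ∈ Submodule.span (PowerSeries k) (Set.range D.word) := by
  induction hT using Algebra.adjoin_induction with
  | mem T hT => obtain ⟨i, rfl⟩ := hT; exact fun x hx => D.ins_mem_span_word i hx
  | algebraMap r => exact fun x hx => Submodule.smul_mem _ r hx
  | add S T _ _ hS hT => exact fun x hx => add_mem (hS x hx) (hT x hx)
  | mul S T _ _ hS hT => exact fun x hx => hS _ (hT x hx)

theorem apply_one_mem_smul_filt {T : Module.End (PowerSeries k) (Sh (PowerSeries k) n)}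
    (hT : T ∈ D.opIdeal) {d : ℕ} (h : T (one _ n) ∈ D.filt d) :
    T (one _ n) ∈ Ideal.span {(PowerSeries.X : PowerSeries k)} • D.filt d := by
  obtain ⟨y, hy, rfl⟩ := D.mem_opIdeal.mp hT
  rw [← D.trunc_eq_self h, LinearMap.smul_apply, map_smul]
  exact Submodule.smul_mem_smul (Ideal.mem_span_singleton_self _)
    (D.trunc_mem_filt d (D.opAlg_apply_mem hy _ (Submodule.subset_span ⟨[], rfl⟩)))

theorem freeAct_pow_mem_filt {d : ℕ} {f : FreeAlgebra k (Fin n)} (hf : f ∈ freeDegLE k n ^ d) :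
    ∀ {N : ℕ}, ∀ x ∈ D.filt N, D.freeAct f x ∈ D.filt (N + d) := by
  have h1 : ∀ f ∈ freeDegLE k n, ∀ {N : ℕ}, ∀ x ∈ D.filt N, D.freeAct f x ∈ D.filt (N + 1) := by
    intro f hf N x hx
    induction hf using Submodule.span_induction with
    | mem f hf =>
      rcases hf with rfl | ⟨i, rfl⟩
      · rw [map_one]; exact D.filt_mono (Nat.le_succ N) hx
      · rw [freeAct_ι]; exact D.ins_mem_filt i hx
    | zero => simp
    | add f g _ _ hf hg => rw [map_add]; exact add_mem hf hg
    | smul c f _ hf =>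
      rw [map_smul, smul_eq_C_smul]
      exact Submodule.smul_mem _ _ hf
  induction d generalizing f with
  | zero =>
    intro N x hx
    rw [pow_zero, Submodule.mem_one] at hf
    obtain ⟨c, rfl⟩ := hf
    rw [AlgHom.commutes, Algebra.algebraMap_eq_smul_one, smul_eq_C_smul]
    exact Submodule.smul_mem _ _ hx
  | succ d ih =>
    intro N x hx
    rw [pow_succ'] at hf
    induction hf using Submodule.mul_induction_on' with
    | mem_mul_mem a ha b hb =>
      rw [map_mul]
      exact h1 a ha _ (ih hb x hx)
    | add a _ b _ ha hb => rw [map_add]; exact add_mem ha hb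

theorem freeAct_prod_one (u : List (Fin n)) :
    D.freeAct (u.map (FreeAlgebra.ι k)).prod (one _ n) = D.word u := by
  induction u with
  | nil => simp
  | cons i u ih =>
    rw [List.map_cons, List.prod_cons, map_mul, freeAct_ι, Module.End.mul_apply, ih, word_cons]

/-- Independent elements of the filtration over power series bound the growth of any quotient of
the free algebra in which only elements acting trivially modulo `X` vanish. -/
theorem card_le_finrank {B : Type*} [Ring B] [Algebra k B] (π : FreeAlgebra k (Fin n) →ₐ[k] B)
    (hπ : ∀ f, π f = 0 → D.freeAct f ∈ D.opIdeal) {d : ℕ}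
    {ι : Type*} [Fintype ι] {y : ι → Sh (PowerSeries k) n}
    (hy : LinearIndependent (PowerSeries k) y) (hyd : ∀ b, y b ∈ D.filt d) :
    Fintype.card ι ≤ Module.finrank k
      ((freeDegLE k n ^ d).map π.toLinearMap) := by
  set V := (freeDegLE k n ^ d).map π.toLinearMap with hV
  have hfg : (freeDegLE k n ^ d).FG := Submodule.FG.pow
    (Submodule.fg_span ((Set.finite_range _).insert _)) d
  have : Module.Finite k V := Module.Finite.iff_fg.mpr (hfg.map _)
  let b := Module.finBasis k V
  choose f hf hfb using fun i => Submodule.mem_map.mp (b i).2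
  have hle : D.filt d ≤ Submodule.span (PowerSeries k)
      (Set.range fun i => D.freeAct (f i) (one _ n)) := by
    refine Submodule.le_of_le_smul_of_le_jacobson_bot
      (I := Ideal.span {(PowerSeries.X : PowerSeries k)}) (D.filt_fg d) ?_ ?_
    · rw [IsLocalRing.jacobson_eq_maximalIdeal _ bot_ne_top, ← PowerSeries.maximalIdeal_eq_span_X]
    · refine Submodule.span_le.mpr ?_
      rintro _ ⟨u, hu, rfl⟩
      have hm := prod_mem_freeDegLE_pow k hu
      set m := (u.map (FreeAlgebra.ι k)).prod with hmdef
      let c := b.repr ⟨π m, Submodule.mem_map_of_mem hm⟩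
      have hc : π (∑ i, c i • f i) = π m := by
        have h := congrArg Subtype.val
          (b.sum_repr ⟨π m, Submodule.mem_map_of_mem hm⟩)
        rw [AddSubmonoidClass.coe_finsetSum] at h
        rw [map_sum]
        refine Eq.trans (Finset.sum_congr rfl fun i _ => ?_) h
        rw [map_smul, Submodule.coe_smul, ← hfb i]
        rfl
      have hg : m - ∑ i, c i • f i ∈ freeDegLE k n ^ d :=
        sub_mem hm (sum_mem fun i _ => Submodule.smul_mem _ _ (hf i))
      have h1 : D.freeAct (m - ∑ i, c i • f i) ∈ D.opIdeal := by
        refine hπ _ ?_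
        rw [map_sub, hc, sub_self]
      have h2 : D.freeAct (m - ∑ i, c i • f i) (one _ n) ∈ D.filt d := by
        have := D.freeAct_pow_mem_filt hg (N := 0) _ (D.word_mem_filt (u := []) le_rfl)
        rwa [zero_add] at this
      have h3 := D.apply_one_mem_smul_filt h1 h2
      rw [SetLike.mem_coe, ← D.freeAct_prod_one u, ← hmdef,
        ← add_sub_cancel (∑ i, c i • f i) m, map_add, LinearMap.add_apply]
      refine Submodule.add_mem_sup ?_ h3
      rw [map_sum, LinearMap.sum_apply]
      refine sum_mem fun i _ => ?_
      rw [map_smul, smul_eq_C_smul, LinearMap.smul_apply]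
      exact Submodule.smul_mem _ _ (Submodule.subset_span ⟨i, rfl⟩)
  classical
  refine (linearIndependent_le_span_aux' y hy
    (Set.range fun i => D.freeAct (f i) (one _ n)) ?_).trans ?_
  · rintro _ ⟨i, rfl⟩
    exact hle (hyd i)
  · exact (Fintype.card_range_le _).trans_eq (Fintype.card_fin _)

theorem length_le_GKdim {B : Type*} [Ring B] [Algebra k B] (π : FreeAlgebra k (Fin n) →ₐ[k] B)
    (hπ : ∀ f, π f = 0 → D.freeAct f ∈ D.opIdeal) {w : List (Fin n)}
    (hw : PosWord D.A w) : (w.length : ENNReal) ≤ GKdim k B := by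
  classical
  obtain ⟨N, hN⟩ := D.exists_linearIndependent hw
  refine le_GKdim_of_growth
    (Finset.univ.image fun i => π (FreeAlgebra.ι k i)) _ (w.length * N) ?_
  intro d K hd
  obtain ⟨y, hy, hyN⟩ := hN K
  have h := D.card_le_finrank π hπ (d := d) hy fun b => D.filt_mono (by nlinarith) (hyN b)
  rw [Fintype.card_fun, Fintype.card_fin, Fintype.card_fin] at h
  have hspan : Submodule.span k (insert 1 ((Finset.univ.image
      fun i => π (FreeAlgebra.ι k i) : Finset B) : Set _)) =
      (freeDegLE k n).map π.toLinearMap := by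
    rw [freeDegLE, Submodule.map_span, Set.image_insert_eq, ← Set.range_comp, Finset.coe_image,
      Finset.coe_univ, Set.image_univ]
    congr 2
    exact (map_one π).symm
  rwa [hspan, ← Submodule.map_pow]

end QDatum

end Stmt16

/-- Let `a = (a_ij)` be a symmetrizable indecomposable generalized
Cartan matrix with symmetrizer `d`, `g = g(a)` the associated Kac–Moody algebra, and
`q ∈ kˣ`, `Q` a braiding matrix with `Q_ii = q^{d_i}` and `Q_ij Q_ji = q^{d_i a_ij}`.
Let `B̆ = T(V)/⟨(ad_c x_i)^{1−a_ij} x_j : i ≠ j⟩`.  Then `GKdim B̆ ≥ dim g⁺`, where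
`g⁺` (the positive part of `g`) is the quotient of the free Lie algebra on `e_1,…,e_n`
by the Lie ideal generated by the Serre elements `(ad e_i)^{1−a_ij}(e_j)`.
(The inequality `GKdim ≥ dim g⁺` is expressed by: every natural number bounded by
`dim g⁺` also bounds `GKdim B̆`.) -/
theorem stmt16 {k : Type*} [Field k] [CharZero k] {n : ℕ} (hn : 0 < n)
    (A : Matrix (Fin n) (Fin n) ℤ)
    (hdiag : ∀ i, A i i = 2)
    (hoff : ∀ i j, i ≠ j → A i j ≤ 0)
    (hzero : ∀ i j, A i j = 0 ↔ A j i = 0)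
    (hindec : ∀ S : Set (Fin n), (∀ i ∈ S, ∀ j, j ∉ S → A i j = 0) → S = ∅ ∨ S = Set.univ)
    (d : Fin n → ℤ) (hd : ∀ i, 0 < d i)
    (hsym : ∀ i j, d i * A i j = d j * A j i)
    (q : kˣ) (Q : Fin n → Fin n → kˣ)
    (hQd : ∀ i, Q i i = q ^ d i)
    (hQo : ∀ i j, i ≠ j → Q i j * Q j i = q ^ (d i * A i j))
    (rel : FreeAlgebra k (Fin n) → FreeAlgebra k (Fin n) → Prop)
    (hrel : rel = fun a b => b = 0 ∧
      ∃ i j, i ≠ j ∧ a = (adIter Q i (1 - A i j).toNat (gen Q j)).1)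
    (I : LieIdeal k (FreeLieAlgebra k (Fin n)))
    (hI : I = LieSubmodule.lieSpan k (FreeLieAlgebra k (Fin n))
      {x | ∃ i j, i ≠ j ∧
        x = ((LieAlgebra.ad k (FreeLieAlgebra k (Fin n)) (FreeLieAlgebra.of k i))
              ^ (1 - A i j).toNat) (FreeLieAlgebra.of k j)}) :
    ∀ m : ℕ, (m : Cardinal) ≤ Module.rank k (FreeLieAlgebra k (Fin n) ⧸ I) →
      (m : ℝ≥0∞) ≤ GKdim k (RingQuot rel) := by
  intro m hm
  have hS := isSerre_quotient (k := k) A I hI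
  set e : Fin n → FreeLieAlgebra k (Fin n) ⧸ I :=
    fun i => LieSubmodule.Quotient.mk (FreeLieAlgebra.of k i)
  have hpos : ∀ β, wtSpace k e β ≠ ⊥ → (∀ l, 0 ≤ β l) ∧ β ≠ 0 := fun β hβ => by
    obtain ⟨x, -, hx⟩ := wtSpace_ne_bot hβ
    exact ⟨hx.nonneg, hx.ne_zero⟩
  have hee : ∀ i, wtSpace k e (ee i) ≠ ⊥ := fun i h =>
    (hS.exists_lowering_operator hzero hdiag hoff i).1 <| by
      rw [← Submodule.mem_bot k, ← h]
      exact Submodule.subset_span (IsMono.gen i)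
  obtain ⟨w, hw, hlen⟩ := exists_goodWord (W := wtSpace k e) hdiag (iSup_wtSpace hS.span) hpos hee
    rank_wtSpace_ee_le (fun i β hβ => hS.rank_wtSpace_le_refl hzero hdiag hoff i hβ) m
  obtain ⟨D, rfl, hQ⟩ := exists_qDatum A hdiag hoff d hd hsym q Q hQd hQo
  have hmw : m ≤ w.length := by
    rcases hlen with h | h
    · exact h.ge
    · exact_mod_cast hm.trans h
  refine (Nat.cast_le.mpr hmw).trans (D.length_le_GKdim (RingQuot.mkAlgHom k rel) (fun f hf => ?_)
    fun x i y t h => hpos _ (hw x i y t h))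
  refine D.freeAct_mem_opIdeal_of_mk_eq_zero (rel := rel) (fun f g hfg => ?_) ?_
  · rw [hrel] at hfg
    obtain ⟨rfl, i, j, hij, rfl⟩ := hfg
    rw [map_zero, sub_zero]
    exact D.freeAct_rel hQ hij
  · rwa [← RingQuot.mkAlgHom_coe k]

end
end
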